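/- arXiv:1709.06893 — 3 statements merged into one kernel-verified Lean document; each statement's English description precedes it below -/
import Mathlib

section
/- Soundness of Π(CS): for every constant specification CS and every formula A ∈ Form^Ag, if A is provable in Π(CS) (⊢_CS A), then A is valid over the class of CS-normal jstit models, i.e., M,m,h ⊨ A for every CS-normal jstit model M and every moment-history pair (m,h) of M. -/
open Classical

/-- Proof polynomials. -/
inductive Pol : Type
  | pvar : ℕ → Pol
  | pconst : ℕ → Pol
  | sum : Pol → Pol → Pol
  | app : Pol → Pol → Pol
  | bang : Pol → Pol

/-- Formulas of explicit jstit logic over an agent community `Ag`. -/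
inductive Form (Ag : Type) : Type
  | var : ℕ → Form Ag
  | and : Form Ag → Form Ag → Form Ag
  | neg : Form Ag → Form Ag
  | stit : Ag → Form Ag → Form Ag
  | box : Form Ag → Form Ag
  | pf : Pol → Form Ag → Form Ag
  | know : Form Ag → Form Ag
  | prove : Ag → Pol → Form Ag → Form Ag
  | proven : Pol → Form Ag → Form Ag

namespace Form

variable {Ag : Type}

def imp (A B : Form Ag) : Form Ag := Form.neg (Form.and A (Form.neg B))

def or (A B : Form Ag) : Form Ag := Form.neg (Form.and (Form.neg A) (Form.neg B))

def falsum : Form Ag := Form.and (Form.var 0) (Form.neg (Form.var 0))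

def dia (A : Form Ag) : Form Ag := Form.neg (Form.box (Form.neg A))

def diaStit (j : Ag) (A : Form Ag) : Form Ag := Form.neg (Form.stit j (Form.neg A))

def conjList : List (Form Ag) → Form Ag
  | [] => Form.neg falsum
  | [A] => A
  | A :: B :: rest => Form.and A (conjList (B :: rest))

def disjList : List (Form Ag) → Form Ag
  | [] => falsum
  | [A] => A
  | A :: B :: rest => Form.or A (disjList (B :: rest))

end Form

/-- Conjunction of `F j` over all agents `j ∈ Ag`. -/
noncomputable def bigConjAg {Ag : Type} [Fintype Ag] (F : Ag → Form Ag) : Form Ag :=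
  Form.conjList (((Finset.univ : Finset Ag).toList).map F)

/-- The axiom schemes (A0)-(A8), (B9)-(B13) of the system Π. -/
inductive Ax {Ag : Type} [Fintype Ag] : Form Ag → Prop
  | pl1 (A B : Form Ag) : Ax (A.imp (B.imp A))
  | pl2 (A B C : Form Ag) : Ax ((A.imp (B.imp C)).imp ((A.imp B).imp (A.imp C)))
  | pl3 (A B : Form Ag) : Ax (((A.neg).imp (B.neg)).imp (B.imp A))
  | boxK (A B : Form Ag) : Ax ((Form.box (A.imp B)).imp ((Form.box A).imp (Form.box B)))
  | boxT (A : Form Ag) : Ax ((Form.box A).imp A)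
  | box4 (A : Form Ag) : Ax ((Form.box A).imp (Form.box (Form.box A)))
  | box5 (A : Form Ag) : Ax ((Form.dia A).imp (Form.box (Form.dia A)))
  | stitK (j : Ag) (A B : Form Ag) :
      Ax ((Form.stit j (A.imp B)).imp ((Form.stit j A).imp (Form.stit j B)))
  | stitT (j : Ag) (A : Form Ag) : Ax ((Form.stit j A).imp A)
  | stit4 (j : Ag) (A : Form Ag) : Ax ((Form.stit j A).imp (Form.stit j (Form.stit j A)))
  | stit5 (j : Ag) (A : Form Ag) : Ax ((Form.diaStit j A).imp (Form.stit j (Form.diaStit j A)))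
  | a2 (j : Ag) (A : Form Ag) : Ax ((Form.box A).imp (Form.stit j A))
  | a3 (l : List (Ag × Form Ag)) (hne : l ≠ []) (hl : l.Pairwise (fun a b => a.1 ≠ b.1)) :
      Ax ((Form.conjList (l.map fun p => Form.dia (Form.stit p.1 p.2))).imp
          (Form.dia (Form.conjList (l.map fun p => Form.stit p.1 p.2))))
  | a4 (s t : Pol) (A B : Form Ag) :
      Ax ((Form.pf s (A.imp B)).imp ((Form.pf t A).imp (Form.pf (Pol.app s t) B)))
  | a5 (t : Pol) (A : Form Ag) :
      Ax ((Form.pf t A).imp (Form.and (Form.pf (Pol.bang t) (Form.pf t A)) (Form.know A)))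
  | a6 (s t : Pol) (A : Form Ag) :
      Ax (((Form.pf s A).or (Form.pf t A)).imp (Form.pf (Pol.sum s t) A))
  | kK (A B : Form Ag) : Ax ((Form.know (A.imp B)).imp ((Form.know A).imp (Form.know B)))
  | kT (A : Form Ag) : Ax ((Form.know A).imp A)
  | k4 (A : Form Ag) : Ax ((Form.know A).imp (Form.know (Form.know A)))
  | a8 (A : Form Ag) : Ax ((Form.know A).imp (Form.box (Form.know (Form.box A))))
  | b9 (j : Ag) (t : Pol) (A : Form Ag) :
      Ax ((Form.prove j t A).imp
        (Form.and ((Form.proven t A).neg)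
          (Form.and (Form.stit j (Form.prove j t A))
            (Form.and ((Form.box (Form.prove j t A)).neg) (Form.pf t A)))))
  | b10 (j : Ag) (t : Pol) (A B : Form Ag) :
      Ax ((Form.and (Form.prove j t A) (Form.pf t B)).imp (Form.prove j t B))
  | b11 (t : Pol) (A : Form Ag) :
      Ax ((Form.proven t A).imp (Form.and (Form.know (Form.proven t A)) (Form.pf t A)))
  | b12 (t : Pol) (A B : Form Ag) :
      Ax ((Form.and (Form.proven t A) (Form.pf t B)).imp (Form.proven t B))
  | b13 (j : Ag) (t : Pol) (A : Form Ag) :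
      Ax (((Form.prove j t A).neg).imp
        (Form.diaStit j (bigConjAg fun i => (Form.prove i t A).neg)))

/-- Provability in Π(CS): the axioms plus modus ponens, K-necessitation,
the rule (S4), and the rule inferring members of CS. -/
inductive Prov {Ag : Type} [Fintype Ag] (CS : Set (Form Ag)) : Form Ag → Prop
  | ax {A : Form Ag} : Ax A → Prov CS A
  | mp {A B : Form Ag} : Prov CS (A.imp B) → Prov CS A → Prov CS B
  | knec {A : Form Ag} : Prov CS A → Prov CS (Form.know A)
  | s4 {A : Form Ag} {l : List (Pol × Form Ag)} (hne : l ≠ []) :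
      Prov CS ((Form.know A).imp (Form.disjList (l.map fun p => (Form.proven p.1 p.2).neg))) →
      Prov CS ((Form.know A).imp
        (Form.disjList (l.map fun p => bigConjAg fun j => (Form.prove j p.1 p.2).neg)))
  | rcs {A : Form Ag} : A ∈ CS → Prov CS A

/-- Formulas of the form c_n : … : c_1 : A with A an axiom instance. -/
inductive CSForm {Ag : Type} [Fintype Ag] : Form Ag → Prop
  | base (c : ℕ) {A : Form Ag} : Ax A → CSForm (Form.pf (Pol.pconst c) A)
  | step (c : ℕ) {B : Form Ag} : CSForm B → CSForm (Form.pf (Pol.pconst c) B)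

/-- CS is a constant specification. -/
def IsConstSpec {Ag : Type} [Fintype Ag] (CS : Set (Form Ag)) : Prop :=
  (∀ A ∈ CS, CSForm A) ∧
  (∀ (c c' : ℕ) (B : Form Ag),
    Form.pf (Pol.pconst c) (Form.pf (Pol.pconst c') B) ∈ CS →
      Form.pf (Pol.pconst c') B ∈ CS)

/-- Γ is CS-consistent. -/
def ConsistentSet {Ag : Type} [Fintype Ag] (CS : Set (Form Ag)) (Γ : Set (Form Ag)) : Prop :=
  ¬ ∃ l : List (Form Ag), l ≠ [] ∧ (∀ A ∈ l, A ∈ Γ) ∧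
      Prov CS ((Form.conjList l).imp Form.falsum)

/-- Γ is CS-maxiconsistent. -/
def MaxiCons {Ag : Type} [Fintype Ag] (CS Γ : Set (Form Ag)) : Prop :=
  ConsistentSet CS Γ ∧ ∀ Δ, Γ ⊆ Δ → ConsistentSet CS Δ → Δ = Γ

/-- The raw ingredients of a jstit model (constraints imposed separately). -/
structure PreModel (Ag : Type) : Type 1 where
  W : Type
  le : W → W → Prop
  Choice : W → Ag → Set W → Set (Set W)
  Act : W → Set W → Set Pol
  R : W → W → Prop
  Re : W → W → Prop
  E : W → Pol → Set (Form Ag)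
  V : ℕ → W → Set W → Prop

namespace PreModel

variable {Ag : Type}

/-- h is a history (maximal chain) passing through m. -/
def HistAt (M : PreModel Ag) (m : M.W) (h : Set M.W) : Prop :=
  IsMaxChain M.le h ∧ m ∈ h

/-- The strict companion ⊲ of ⊴. -/
def lt (M : PreModel Ag) (m m' : M.W) : Prop := M.le m m' ∧ m ≠ m'

/-- h and g are undivided at m. -/
def Undiv (M : PreModel Ag) (m : M.W) (h g : Set M.W) : Prop :=
  ∃ m', M.lt m m' ∧ m' ∈ h ∧ m' ∈ g

/-- Act_m = ⋂_{h ∈ H_m} Act(m,h). -/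
def ActM (M : PreModel Ag) (m : M.W) : Set Pol :=
  {t | ∀ h, M.HistAt m h → t ∈ M.Act m h}

/-- Act_{(m,h,j)} = ⋂_{g ∈ Choice^m_j(h)} Act(m,g). -/
def ActC (M : PreModel Ag) (m : M.W) (h : Set M.W) (j : Ag) : Set Pol :=
  {t | ∀ g ∈ M.Choice m j h, t ∈ M.Act m g}

/-- The satisfaction relation M, m, h ⊨ A. -/
def Sat (M : PreModel Ag) : Form Ag → M.W → Set M.W → Prop
  | Form.var p, m, h => M.V p m h
  | Form.and A B, m, h => M.Sat A m h ∧ M.Sat B m h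
  | Form.neg A, m, h => ¬ M.Sat A m h
  | Form.stit j A, m, h => ∀ h' ∈ M.Choice m j h, M.Sat A m h'
  | Form.box A, m, _h => ∀ h', M.HistAt m h' → M.Sat A m h'
  | Form.know A, m, _h => ∀ m' h', M.R m m' → M.HistAt m' h' → M.Sat A m' h'
  | Form.pf t A, m, _h =>
      A ∈ M.E m t ∧ ∀ m' h', M.Re m m' → M.HistAt m' h' → M.Sat A m' h'
  | Form.prove j t A, m, h =>
      t ∈ M.ActC m h j ∧
      (A ∈ M.E m t ∧ ∀ m' h', M.Re m m' → M.HistAt m' h' → M.Sat A m' h') ∧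
      t ∉ M.ActM m
  | Form.proven t A, m, _h =>
      t ∈ M.ActM m ∧
      (A ∈ M.E m t ∧ ∀ m' h', M.Re m m' → M.HistAt m' h' → M.Sat A m' h')

/-- The eleven (plus basic order/partition) constraints making a `PreModel` a jstit model. -/
structure IsJStit (M : PreModel Ag) : Prop where
  nonempty : Nonempty M.W
  le_refl : ∀ m, M.le m m
  le_trans : ∀ m1 m2 m3, M.le m1 m2 → M.le m2 m3 → M.le m1 m3
  le_antisymm : ∀ m1 m2, M.le m1 m2 → M.le m2 m1 → m1 = m2
  histConn : ∀ m m1, ∃ m2, M.le m2 m ∧ M.le m2 m1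
  noBackBranch : ∀ m m1 m2, M.le m1 m → M.le m2 m → (M.le m1 m2 ∨ M.le m2 m1)
  choice_self : ∀ m j h, M.HistAt m h → h ∈ M.Choice m j h
  choice_hist : ∀ m j h, M.HistAt m h → ∀ g ∈ M.Choice m j h, M.HistAt m g
  choice_cells : ∀ m j h, M.HistAt m h → ∀ g ∈ M.Choice m j h, M.Choice m j g = M.Choice m j h
  noChoiceUndiv : ∀ m j h g, M.HistAt m h → M.HistAt m g → M.Undiv m h g →
      M.Choice m j h = M.Choice m j g
  indep : ∀ m (f : Ag → Set M.W), (∀ j, M.HistAt m (f j)) →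
      ∃ h, ∀ j, h ∈ M.Choice m j (f j)
  r_refl : ∀ m, M.R m m
  r_trans : ∀ m1 m2 m3, M.R m1 m2 → M.R m2 m3 → M.R m1 m3
  re_refl : ∀ m, M.Re m m
  re_trans : ∀ m1 m2 m3, M.Re m1 m2 → M.Re m2 m3 → M.Re m1 m3
  r_sub_re : ∀ m m', M.R m m' → M.Re m m'
  monoEv : ∀ (t : Pol) m m', M.Re m m' → M.E m t ⊆ M.E m' t
  evApp : ∀ m (s t : Pol) (A B : Form Ag),
      A.imp B ∈ M.E m s → A ∈ M.E m t → B ∈ M.E m (Pol.app s t)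
  evSum : ∀ m (s t : Pol), M.E m s ∪ M.E m t ⊆ M.E m (Pol.sum s t)
  evBang : ∀ m (t : Pol) (A : Form Ag), A ∈ M.E m t → Form.pf t A ∈ M.E m (Pol.bang t)
  expand : ∀ m' m h, M.lt m' m → M.HistAt m h → M.Act m' h ⊆ M.Act m h
  noNew : ∀ m t, t ∈ M.ActM m → ∃ m' h, M.lt m' m ∧ M.HistAt m h ∧ t ∈ M.Act m' h
  divide : ∀ m h g, M.HistAt m h → M.HistAt m g → M.Undiv m h g → M.Act m h = M.Act m g
  futureMatters : ∀ m m', M.le m m' → M.R m m'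
  transparency : ∀ m m', M.Re m m' → M.ActM m ⊆ M.ActM m'

/-- M is CS-normal. -/
def CSNormal [Fintype Ag] (M : PreModel Ag) (CS : Set (Form Ag)) : Prop :=
  ∀ (c : ℕ) (m : M.W) (A : Form Ag), Form.pf (Pol.pconst c) A ∈ CS → A ∈ M.E m (Pol.pconst c)

/-- M is unirelational: R_e ⊆ R (hence R_e = R). -/
def Unirelational (M : PreModel Ag) : Prop := ∀ m m', M.Re m m' → M.R m m'

/-- M is based on discrete time: every history is order-isomorphic to an
initial segment of ω. -/
def DiscreteTime (M : PreModel Ag) : Prop :=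
  ∀ h : Set M.W, IsMaxChain M.le h →
    ∃ f : M.W → ℕ,
      (∀ x ∈ h, ∀ y ∈ h, (M.le x y ↔ f x ≤ f y)) ∧
      (∀ x ∈ h, ∀ n : ℕ, n ≤ f x → ∃ y ∈ h, f y = n)

end PreModel

/-- The step relation between consecutive components of an element. -/
def ElemStep {Ag : Type} (Γ Δ : Set (Form Ag)) : Prop :=
  (∀ A : Form Ag, Form.know A ∈ Γ → Form.know A ∈ Δ) ∧
  (∀ (j : Ag) (t : Pol) (A : Form Ag), Form.prove j t A ∈ Γ → Form.proven t A ∈ Δ)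

/-- An element: a nonempty finite sequence of CS-maxiconsistent sets
satisfying the two transfer conditions. -/
def IsElement {Ag : Type} [Fintype Ag] (CS : Set (Form Ag)) (l : List (Set (Form Ag))) : Prop :=
  l ≠ [] ∧ (∀ Γ ∈ l, MaxiCons CS Γ) ∧ l.Chain' ElemStep

/-- end(ξ): the last component of an element. -/
def endSet {Ag : Type} (l : List (Set (Form Ag))) : Set (Form Ag) := l.getLastD ∅

/-- The relation ≡ between elements (of equal length). -/
def ElemEquiv {Ag : Type} (l₁ l₂ : List (Set (Form Ag))) : Prop :=
  l₁ ≠ [] ∧ l₂ ≠ [] ∧ l₁.dropLast = l₂.dropLast ∧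
  ∀ A : Form Ag, Form.box A ∈ endSet l₁ → A ∈ endSet l₂

/-- The ≡-equivalence class of an element ξ. -/
def eqcl {Ag : Type} [Fintype Ag] (CS : Set (Form Ag)) (ξ : List (Set (Form Ag))) :
    Set (List (Set (Form Ag))) :=
  {τ | IsElement CS τ ∧ ElemEquiv ξ τ}

/-- C is a ≡-equivalence class of elements. -/
def IsEqClass {Ag : Type} [Fintype Ag] (CS : Set (Form Ag))
    (C : Set (List (Set (Form Ag)))) : Prop :=
  ∃ ξ, IsElement CS ξ ∧ C = eqcl CS ξ

/-- The canonical Tree: † (= `none`) together with the standard moments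
([ξ]_≡, n) (= `some (⟨[ξ]_≡, _⟩, n)`). -/
abbrev CanW (Ag : Type) [Fintype Ag] (CS : Set (Form Ag)) : Type :=
  Option ({C : Set (List (Set (Form Ag))) // IsEqClass CS C} × ℕ)

/-- ξ is a proper initial segment of τ. -/
def ProperPrefix {α : Type} (ξ τ : List α) : Prop := ξ <+: τ ∧ ξ ≠ τ

/-- The canonical strict order ⊲. -/
def canLt {Ag : Type} [Fintype Ag] (CS : Set (Form Ag)) : CanW Ag CS → CanW Ag CS → Prop
  | none, none => False
  | none, some _ => True
  | some _, none => False
  | some p, some q =>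
      (∃ ξ ∈ p.1.val, ∀ τ ∈ q.1.val, ProperPrefix ξ τ) ∨ (p.1.val = q.1.val ∧ q.2 < p.2)

/-- The canonical order ⊴ (reflexive closure of ⊲). -/
def canLe {Ag : Type} [Fintype Ag] (CS : Set (Form Ag)) (m m' : CanW Ag CS) : Prop :=
  canLt CS m m' ∨ m = m'

/-- The height of a canonical moment. -/
def canHeight {Ag : Type} [Fintype Ag] {CS : Set (Form Ag)} : CanW Ag CS → ℕ
  | none => 0
  | some p => p.2

/-- A basic sequence of elements (indexed so that `S n` has length n+1). -/
def BasicSeq {Ag : Type} [Fintype Ag] (CS : Set (Form Ag))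
    (S : ℕ → List (Set (Form Ag))) : Prop :=
  ∀ n, IsElement CS (S n) ∧ (S n).length = n + 1 ∧ S n = (S (n + 1)).dropLast

/-- [S]: the subset of the canonical Tree induced by a basic sequence S. -/
def SeqSet {Ag : Type} [Fintype Ag] (CS : Set (Form Ag))
    (S : ℕ → List (Set (Form Ag))) : Set (CanW Ag CS) :=
  {m | m = none ∨ ∃ p : {C : Set (List (Set (Form Ag))) // IsEqClass CS C} × ℕ,
        m = some p ∧ ∃ n, p.1.val = eqcl CS (S n)}

/-- The standard canonical moment ([ξ]_≡, k). -/
def stdM {Ag : Type} [Fintype Ag] (CS : Set (Form Ag)) (ξ : List (Set (Form Ag)))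
    (hξ : IsElement CS ξ) (k : ℕ) : CanW Ag CS :=
  some (⟨eqcl CS ξ, ⟨ξ, hξ, rfl⟩⟩, k)

/-- H_m in the canonical Tree. -/
def canHist {Ag : Type} [Fintype Ag] (CS : Set (Form Ag)) (m : CanW Ag CS) :
    Set (Set (CanW Ag CS)) :=
  {h | IsMaxChain (canLe CS) h ∧ m ∈ h}

/-- τ is the intersection m ⊓ h of a standard moment m with a history h. -/
def InterRel {Ag : Type} [Fintype Ag] (CS : Set (Form Ag)) (m : CanW Ag CS)
    (h : Set (CanW Ag CS)) (τ : List (Set (Form Ag))) : Prop :=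
  (∃ p, m = some p ∧ τ ∈ p.1.val) ∧
  ∃ S, BasicSeq CS S ∧ h = SeqSet CS S ∧ ∃ n, τ = S n

/-- The intersection m ⊓ h as a function (via choice; `[]` if undefined). -/
noncomputable def interF {Ag : Type} [Fintype Ag] (CS : Set (Form Ag)) (m : CanW Ag CS)
    (h : Set (CanW Ag CS)) : List (Set (Form Ag)) :=
  if hx : ∃ τ, InterRel CS m h τ then hx.choose else []

/-- The canonical choice function: the cell of h at m for agent j. -/
noncomputable def canChoice {Ag : Type} [Fintype Ag] (CS : Set (Form Ag)) (m : CanW Ag CS)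
    (j : Ag) (h : Set (CanW Ag CS)) : Set (Set (CanW Ag CS)) :=
  if m.isSome = true ∧ canHeight m = 0 then
    {h' | h' ∈ canHist CS m ∧
      ∀ A : Form Ag, Form.stit j A ∈ endSet (interF CS m h) → A ∈ endSet (interF CS m h')}
  else canHist CS m

/-- The canonical Act function. -/
noncomputable def canAct {Ag : Type} [Fintype Ag] (CS : Set (Form Ag)) :
    CanW Ag CS → Set (CanW Ag CS) → Set Pol
  | none, _ => ∅
  | some p, h =>
      if p.2 = 0 then
        {t | ∃ A : Form Ag, Form.proven t A ∈ endSet (interF CS (some p) h) ∨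
              ∃ j : Ag, Form.prove j t A ∈ endSet (interF CS (some p) h)}
      else {t | ∃ A : Form Ag, Form.proven t A ∈ endSet (interF CS (some p) h)}

/-- Act_m in the canonical model. -/
noncomputable def canActM {Ag : Type} [Fintype Ag] (CS : Set (Form Ag)) (m : CanW Ag CS) :
    Set Pol :=
  {t | ∀ g ∈ canHist CS m, t ∈ canAct CS m g}

/-- end_m = ⋂_{h ∈ H_m} end(m ⊓ h). -/
noncomputable def endM {Ag : Type} [Fintype Ag] (CS : Set (Form Ag)) (m : CanW Ag CS) :
    Set (Form Ag) :=
  {A | ∀ h ∈ canHist CS m, A ∈ endSet (interF CS m h)}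

/-- The canonical epistemic accessibility relation. -/
def canR {Ag : Type} [Fintype Ag] (CS : Set (Form Ag)) : CanW Ag CS → CanW Ag CS → Prop
  | none, _ => True
  | some _, none => False
  | some p, some q =>
      ∀ (A : Form Ag), ∀ ξ ∈ p.1.val, Form.know A ∈ endSet ξ → Form.know A ∈ endM CS (some q)

/-- The canonical admissible evidence function. -/
noncomputable def canE {Ag : Type} [Fintype Ag] (CS : Set (Form Ag)) :
    CanW Ag CS → Pol → Set (Form Ag)
  | none, t => {A | Prov CS (Form.pf t A)}
  | some p, t => {A | Form.pf t A ∈ endM CS (some p)}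

/-- The canonical valuation. -/
def canV {Ag : Type} [Fintype Ag] (CS : Set (Form Ag)) (n : ℕ) (m : CanW Ag CS)
    (h : Set (CanW Ag CS)) : Prop :=
  m.isSome = true ∧ Form.var n ∈ endSet (interF CS m h)

/-- The canonical model M^Ag_CS (unirelational: R_e = R). -/
noncomputable def canModel {Ag : Type} [Fintype Ag] (CS : Set (Form Ag)) : PreModel Ag where
  W := CanW Ag CS
  le := canLe CS
  Choice := canChoice CS
  Act := canAct CS
  R := canR CS
  Re := canR CS
  E := canE CS
  V := canV CS

/-- The alternative system Π'(CS) with axiom scheme (A_S4) in place of rule (S4). -/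
inductive Prov' {Ag : Type} [Fintype Ag] (CS : Set (Form Ag)) : Form Ag → Prop
  | ax {A : Form Ag} : Ax A → Prov' CS A
  | as4 (l : List (Pol × Form Ag)) (hne : l ≠ []) :
      Prov' CS ((Form.know (Form.disjList (l.map fun p => (Form.proven p.1 p.2).neg))).imp
        (Form.disjList (l.map fun p => bigConjAg fun j => (Form.prove j p.1 p.2).neg)))
  | mp {A B : Form Ag} : Prov' CS (A.imp B) → Prov' CS A → Prov' CS B
  | knec {A : Form Ag} : Prov' CS A → Prov' CS (Form.know A)
  | rcs {A : Form Ag} : A ∈ CS → Prov' CS A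

/-- A is moment-determinate in M. -/
def MomentDet {Ag : Type} (M : PreModel Ag) (A : Form Ag) : Prop :=
  ∀ m h h', M.HistAt m h → M.HistAt m h' → (M.Sat A m h ↔ M.Sat A m h')

/-!
Almost every axiom is a direct reading of one constraint on the model; the rule (S4) is where the
branching of time matters. If `h` satisfies `KA` and `Prove(jᵢ, tᵢ, Bᵢ)` for all `i` at a moment
`m`, then some proof is presented along `h` but not along every history through `m`, so `h` cannot
end at `m`: a maximal chain with last moment `m` is the only history through `m`. At a later moment
`m'` of `h`, the histories are all undivided from `h` at `m`, hence carry each `tᵢ` already at `m`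
and still at `m'`. So `KA` and all the `Proven(tᵢ, Bᵢ)` hold at `m'`, contrary to the premise.
-/

section MaximalChains

variable {α : Type*} {r : α → α → Prop} [IsTrans α r] {s t : Set α} {a b : α}

theorem mem_of_rel_of_isMaxChain (hr : ∀ c, IsChain r {x | r x c}) (hs : IsMaxChain r s)
    (hb : b ∈ s) (hab : r a b) : a ∈ s := by
  have hins : IsChain r (insert a s) := by
    refine hs.1.insert fun x hx hax => ?_
    obtain rfl | hxb := eq_or_ne x b
    · exact .inl hab
    · rcases hs.1 hx hb hxb with h | h
      · exact hr b hab h hax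
      · exact .inl (_root_.trans hab h)
  exact hs.2 hins (Set.subset_insert a s) ▸ Set.mem_insert a s

theorem eq_of_isMaxChain_of_forall_rel (hr : ∀ c, IsChain r {x | r x c}) (hs : IsMaxChain r s)
    (ht : IsMaxChain r t) (has : a ∈ s) (hat : a ∈ t) (hmax : ∀ x ∈ s, x ≠ a → r x a) :
    t = s := by
  refine ht.2 hs.1 fun y hy => ?_
  obtain rfl | hya := eq_or_ne y a
  · exact has
  rcases ht.1 hy hat hya with hyr | hyr
  · exact mem_of_rel_of_isMaxChain hr hs has hyr
  · have hins : IsChain r (insert y s) := by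
      refine hs.1.insert fun x hx _ => .inr ?_
      obtain rfl | hxa := eq_or_ne x a
      · exact hyr
      · exact _root_.trans (hmax x hx hxa) hyr
    exact hs.2 hins (Set.subset_insert y s) ▸ Set.mem_insert y s

end MaximalChains

namespace PreModel

variable {Ag : Type} {M : PreModel Ag} {m m' : M.W} {h h' g : Set M.W} {A B : Form Ag}
  {i j : Ag} {s t : Pol}

/-- `A` is true at every moment-history pair of `M`. -/
def Valid (M : PreModel Ag) (A : Form Ag) : Prop :=
  ∀ m h, M.HistAt m h → M.Sat A m h

/-! ### Satisfaction clauses -/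

theorem sat_and : M.Sat (A.and B) m h ↔ M.Sat A m h ∧ M.Sat B m h := Iff.rfl

theorem sat_neg : M.Sat A.neg m h ↔ ¬ M.Sat A m h := Iff.rfl

theorem sat_stit : M.Sat (.stit j A) m h ↔ ∀ g ∈ M.Choice m j h, M.Sat A m g := Iff.rfl

theorem sat_box : M.Sat A.box m h ↔ ∀ g, M.HistAt m g → M.Sat A m g := Iff.rfl

theorem sat_know :
    M.Sat A.know m h ↔ ∀ m' h', M.R m m' → M.HistAt m' h' → M.Sat A m' h' := Iff.rfl

theorem sat_pf : M.Sat (.pf t A) m h ↔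
    A ∈ M.E m t ∧ ∀ m' h', M.Re m m' → M.HistAt m' h' → M.Sat A m' h' := Iff.rfl

theorem sat_prove : M.Sat (.prove j t A) m h ↔
    t ∈ M.ActC m h j ∧ M.Sat (.pf t A) m h ∧ t ∉ M.ActM m := Iff.rfl

theorem sat_proven : M.Sat (.proven t A) m h ↔ t ∈ M.ActM m ∧ M.Sat (.pf t A) m h := Iff.rfl

theorem sat_imp : M.Sat (A.imp B) m h ↔ (M.Sat A m h → M.Sat B m h) := by
  simp only [Form.imp, sat_and, sat_neg]; tauto

theorem sat_or : M.Sat (A.or B) m h ↔ M.Sat A m h ∨ M.Sat B m h := by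
  simp only [Form.or, sat_and, sat_neg]; tauto

theorem not_sat_falsum : ¬ M.Sat Form.falsum m h := fun hf => hf.2 hf.1

theorem sat_dia : M.Sat A.dia m h ↔ ∃ g, M.HistAt m g ∧ M.Sat A m g := by
  simp [Form.dia, sat_neg, sat_box]

theorem sat_diaStit : M.Sat (A.diaStit j) m h ↔ ∃ g ∈ M.Choice m j h, M.Sat A m g := by
  simp [Form.diaStit, sat_neg, sat_stit]

theorem sat_conjList {l : List (Form Ag)} :
    M.Sat (Form.conjList l) m h ↔ ∀ A ∈ l, M.Sat A m h := by
  induction l with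
  | nil => simp [Form.conjList, sat_neg, not_sat_falsum]
  | cons A l ih =>
    cases l with
    | nil => simp [Form.conjList]
    | cons B l => simp [Form.conjList, sat_and, ih]

theorem sat_disjList {l : List (Form Ag)} :
    M.Sat (Form.disjList l) m h ↔ ∃ A ∈ l, M.Sat A m h := by
  induction l with
  | nil => simp [Form.disjList, not_sat_falsum]
  | cons A l ih =>
    cases l with
    | nil => simp [Form.disjList]
    | cons B l => simp [Form.disjList, sat_or, ih]

theorem sat_bigConjAg [Fintype Ag] {F : Ag → Form Ag} :
    M.Sat (bigConjAg F) m h ↔ ∀ j, M.Sat (F j) m h := by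
  simp [bigConjAg, sat_conjList]

/-! ### Agency -/

/-- The constraints on choice alone: the cells partition the histories through each moment, and
agents choose independently (4). -/
structure IsStit (M : PreModel Ag) : Prop where
  mem_choice_self : ∀ m j h, M.HistAt m h → h ∈ M.Choice m j h
  histAt_of_mem_choice : ∀ m j h, M.HistAt m h → ∀ g ∈ M.Choice m j h, M.HistAt m g
  choice_eq : ∀ m j h, M.HistAt m h → ∀ g ∈ M.Choice m j h, M.Choice m j g = M.Choice m j h
  indep : ∀ m (f : Ag → Set M.W), (∀ j, M.HistAt m (f j)) → ∃ h, ∀ j, h ∈ M.Choice m j (f j)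

namespace IsStit

theorem exists_forall_mem_choice {ι : Type*} [Nonempty ι] (S : M.IsStit) {a : ι → Ag}
    (ha : a.Injective) {f : ι → Set M.W} (hf : ∀ i, M.HistAt m (f i)) :
    ∃ g, M.HistAt m g ∧ ∀ i, g ∈ M.Choice m (a i) (f i) := by
  let f' : Ag → Set M.W := Function.extend a f fun _ => f (Classical.arbitrary ι)
  have hf' (j : Ag) : M.HistAt m (f' j) := by
    by_cases hj : ∃ i, a i = j
    · obtain ⟨i, rfl⟩ := hj
      simpa only [f', ha.extend_apply] using hf i
    · simpa only [f', Function.extend_apply' _ _ _ hj] using hf _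
  obtain ⟨g, hg⟩ := S.indep m f' hf'
  have hgf (i : ι) : g ∈ M.Choice m (a i) (f i) := by
    simpa only [f', ha.extend_apply] using hg (a i)
  exact ⟨g, S.histAt_of_mem_choice m _ _ (hf _) g (hgf (Classical.arbitrary ι)), hgf⟩

theorem sat_stit_iff_of_mem_choice (S : M.IsStit) (hh : M.HistAt m h) (hg : g ∈ M.Choice m j h) :
    M.Sat (.stit j A) m g ↔ M.Sat (.stit j A) m h := by
  rw [sat_stit, sat_stit, S.choice_eq m j h hh g hg]

theorem sat_diaStit_iff_of_mem_choice (S : M.IsStit) (hh : M.HistAt m h)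
    (hg : g ∈ M.Choice m j h) :
    M.Sat (A.diaStit j) m g ↔ M.Sat (A.diaStit j) m h := by
  rw [sat_diaStit, sat_diaStit, S.choice_eq m j h hh g hg]

theorem exists_forall_sat_stit (S : M.IsStit) {l : List (Ag × Form Ag)} (hne : l ≠ [])
    (hl : l.Pairwise fun p q => p.1 ≠ q.1)
    (hsat : ∀ p ∈ l, ∃ g, M.HistAt m g ∧ M.Sat (.stit p.1 p.2) m g) :
    ∃ g, M.HistAt m g ∧ ∀ p ∈ l, M.Sat (.stit p.1 p.2) m g := by
  have hinj : Function.Injective fun p : {p // p ∈ l} => p.1.1 := fun p q hpq =>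
    Subtype.ext (List.inj_on_of_nodup_map (List.pairwise_map.2 hl) p.2 q.2 hpq)
  have : Nonempty {p // p ∈ l} := (List.exists_mem_of_ne_nil l hne).elim fun p hp => ⟨p, hp⟩
  choose f hf hsat using fun p : {p // p ∈ l} => hsat p.1 p.2
  obtain ⟨g, hg, hgf⟩ := S.exists_forall_mem_choice hinj hf
  exact ⟨g, hg, fun p hp =>
    (S.sat_stit_iff_of_mem_choice (hf ⟨p, hp⟩) (hgf ⟨p, hp⟩)).2 (hsat ⟨p, hp⟩)⟩

theorem actC_subset_act (S : M.IsStit) (hh : M.HistAt m h) : M.ActC m h j ⊆ M.Act m h :=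
  fun _ ht => ht h (S.mem_choice_self m j h hh)

theorem sat_stit_prove (S : M.IsStit) (hh : M.HistAt m h) (hp : M.Sat (.prove j t A) m h) :
    M.Sat (.stit j (.prove j t A)) m h := by
  intro g hg
  have hact : t ∈ M.ActC m g j := by
    rw [ActC, S.choice_eq m j h hh g hg]
    exact hp.1
  exact sat_prove.2 ⟨hact, hp.2⟩

theorem not_sat_box_prove (S : M.IsStit) (hh : M.HistAt m h) :
    ¬ M.Sat (Form.prove j t A).box m h := fun hbox =>
  (hbox h hh).2.2 fun g hg => S.actC_subset_act hg (hbox g hg).1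

theorem exists_forall_not_sat_prove (S : M.IsStit) (hh : M.HistAt m h)
    (hp : ¬ M.Sat (.prove j t A) m h) :
    ∃ g ∈ M.Choice m j h, ∀ i, ¬ M.Sat (.prove i t A) m g := by
  by_cases hact : t ∈ M.ActC m h j
  · exact ⟨h, S.mem_choice_self m j h hh, fun i hi => hp (sat_prove.2 ⟨hact, hi.2⟩)⟩
  · obtain ⟨g, hg, hgt⟩ : ∃ g ∈ M.Choice m j h, t ∉ M.Act m g := by
      simpa [ActC] using hact
    have hgm := S.histAt_of_mem_choice m j h hh g hg
    exact ⟨g, hg, fun i hi => hgt (S.actC_subset_act hgm hi.1)⟩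

end IsStit

/-! ### Knowledge and evidence -/

/-- The epistemic constraints: the accessibility relations, the closure conditions (5) and (6) on
evidence, and the transparency (11) of presented proofs. -/
structure IsJustification (M : PreModel Ag) : Prop where
  r_refl : ∀ m, M.R m m
  r_trans : ∀ m₁ m₂ m₃, M.R m₁ m₂ → M.R m₂ m₃ → M.R m₁ m₃
  re_trans : ∀ m₁ m₂ m₃, M.Re m₁ m₂ → M.Re m₂ m₃ → M.Re m₁ m₃
  r_sub_re : ∀ m m', M.R m m' → M.Re m m'
  monoEv : ∀ t m m', M.Re m m' → M.E m t ⊆ M.E m' t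
  evApp : ∀ m s t (A B : Form Ag), A.imp B ∈ M.E m s → A ∈ M.E m t → B ∈ M.E m (s.app t)
  evSum : ∀ m s t, M.E m s ∪ M.E m t ⊆ M.E m (s.sum t)
  evBang : ∀ m t (A : Form Ag), A ∈ M.E m t → Form.pf t A ∈ M.E m t.bang
  transparency : ∀ m m', M.Re m m' → M.ActM m ⊆ M.ActM m'

namespace IsJustification

theorem sat_know_of_r (K : M.IsJustification) (hr : M.R m m') (hA : M.Sat A.know m h) :
    M.Sat A.know m' h' :=
  fun n k hn hk => hA n k (K.r_trans _ _ _ hr hn) hk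

theorem sat_pf_of_re (K : M.IsJustification) (hr : M.Re m m') (hA : M.Sat (.pf t A) m h) :
    M.Sat (.pf t A) m' h' :=
  sat_pf.2 ⟨K.monoEv t m m' hr hA.1, fun n k hn hk => hA.2 n k (K.re_trans _ _ _ hr hn) hk⟩

theorem sat_proven_of_re (K : M.IsJustification) (hr : M.Re m m')
    (hA : M.Sat (.proven t A) m h) : M.Sat (.proven t A) m' h' :=
  sat_proven.2 ⟨K.transparency m m' hr hA.1, K.sat_pf_of_re (h := h) hr hA.2⟩

theorem sat_pf_app (K : M.IsJustification) (hs : M.Sat (.pf s (A.imp B)) m h)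
    (ht : M.Sat (.pf t A) m h) : M.Sat (.pf (s.app t) B) m h :=
  sat_pf.2 ⟨K.evApp m s t A B hs.1 ht.1,
    fun n k hn hk => sat_imp.1 (hs.2 n k hn hk) (ht.2 n k hn hk)⟩

theorem sat_pf_bang (K : M.IsJustification) (hA : M.Sat (.pf t A) m h) :
    M.Sat (.pf t.bang (.pf t A)) m h :=
  sat_pf.2 ⟨K.evBang m t A hA.1, fun _ _ hn _ => K.sat_pf_of_re (h := h) hn hA⟩

theorem sat_know_of_sat_pf (K : M.IsJustification) (hA : M.Sat (.pf t A) m h) :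
    M.Sat A.know m h :=
  fun n k hn hk => hA.2 n k (K.r_sub_re _ _ hn) hk

theorem sat_pf_sum (K : M.IsJustification)
    (hA : M.Sat (.pf s A) m h ∨ M.Sat (.pf t A) m h) : M.Sat (.pf (s.sum t) A) m h :=
  sat_pf.2 ⟨K.evSum m s t (hA.imp And.left And.left), hA.elim And.right And.right⟩

end IsJustification

/-! ### Branching time -/

/-- The jstit constraints except for nonemptiness and antisymmetry of the tree, historical
connection (1), absence of choice between undivided histories (3) and absence of new guaranteed
proofs (8). Absence of backward branching (2) is phrased as: the predecessors of any moment form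
a chain. -/
structure IsWeakJStit (M : PreModel Ag) : Prop extends M.IsStit, M.IsJustification where
  le_trans : IsTrans M.W M.le
  isChain_le : ∀ m, IsChain M.le {m' | M.le m' m}
  expand : ∀ m' m h, M.lt m' m → M.HistAt m h → M.Act m' h ⊆ M.Act m h
  divide : ∀ m h g, M.HistAt m h → M.HistAt m g → M.Undiv m h g → M.Act m h = M.Act m g
  futureMatters : ∀ m m', M.le m m' → M.R m m'

theorem IsJStit.isWeakJStit (J : M.IsJStit) : M.IsWeakJStit where
  mem_choice_self := J.choice_self
  histAt_of_mem_choice := J.choice_hist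
  choice_eq := J.choice_cells
  __ := J
  le_trans := ⟨J.le_trans⟩
  isChain_le m _ h₁ _ h₂ _ := J.noBackBranch m _ _ h₁ h₂

namespace IsWeakJStit

theorem histAt_of_le (J : M.IsWeakJStit) (hle : M.le m m') (hh : M.HistAt m' h) :
    M.HistAt m h :=
  have := J.le_trans
  ⟨hh.1, mem_of_rel_of_isMaxChain J.isChain_le hh.1 hh.2 hle⟩

theorem exists_lt_of_notMem_actM (J : M.IsWeakJStit) (hh : M.HistAt m h) (ht : t ∈ M.Act m h)
    (htm : t ∉ M.ActM m) : ∃ m' ∈ h, M.lt m m' := by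
  have := J.le_trans
  by_contra! hlast
  have hmax (x : M.W) (hx : x ∈ h) (hxm : x ≠ m) : M.le x m :=
    (hh.1.1 hx hh.2 hxm).resolve_right fun hmx => hlast x hx ⟨hmx, hxm.symm⟩
  refine htm fun g hg => ?_
  rwa [eq_of_isMaxChain_of_forall_rel J.isChain_le hh.1 hg.1 hh.2 hg.2 hmax]

theorem mem_actM_of_lt (J : M.IsWeakJStit) (hh : M.HistAt m h) (ht : t ∈ M.Act m h)
    (hlt : M.lt m m') (hm' : m' ∈ h) : t ∈ M.ActM m' := by
  intro g hg
  have hundiv : M.Undiv m h g := ⟨m', hlt, hm', hg.2⟩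
  rw [J.divide m h g hh (J.histAt_of_le hlt.1 hg) hundiv] at ht
  exact J.expand m m' g hlt hg ht

theorem sat_proven_of_sat_prove_of_lt (J : M.IsWeakJStit) (hh : M.HistAt m h)
    (hp : M.Sat (.prove j t A) m h) (hlt : M.lt m m') (hm' : m' ∈ h) :
    M.Sat (.proven t A) m' h' :=
  sat_proven.2 ⟨J.mem_actM_of_lt hh (J.actC_subset_act hh hp.1) hlt hm',
    J.sat_pf_of_re (h := h) (J.r_sub_re _ _ (J.futureMatters _ _ hlt.1)) hp.2.1⟩

end IsWeakJStit

/-! ### Axioms and rules -/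

variable [Fintype Ag] {CS : Set (Form Ag)}

theorem IsWeakJStit.valid_of_ax (J : M.IsWeakJStit) (hA : Ax A) : M.Valid A := by
  intro m h hh
  cases hA with
  | pl1 | pl2 | pl3 => simp only [sat_imp, sat_neg]; tauto
  | boxK | stitK =>
    simp only [sat_imp, sat_box, sat_stit]
    exact fun h₁ h₂ g hg => h₁ g hg (h₂ g hg)
  | boxT => exact sat_imp.2 fun h₁ => h₁ h hh
  | box4 | box5 => exact sat_imp.2 fun h₁ _ _ => h₁
  | stitT j => exact sat_imp.2 fun h₁ => h₁ h (J.mem_choice_self m j h hh)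
  | stit4 => exact sat_imp.2 fun h₁ _ hg => (J.sat_stit_iff_of_mem_choice hh hg).2 h₁
  | stit5 => exact sat_imp.2 fun h₁ _ hg => (J.sat_diaStit_iff_of_mem_choice hh hg).2 h₁
  | a2 j => exact sat_imp.2 fun h₁ g hg => h₁ g (J.histAt_of_mem_choice m j h hh g hg)
  | a3 l hne hl =>
    simp only [sat_imp, sat_dia, sat_conjList, List.forall_mem_map]
    exact J.exists_forall_sat_stit hne hl
  | a4 => simp only [sat_imp]; exact J.sat_pf_app
  | a5 => exact sat_imp.2 fun h₁ => sat_and.2 ⟨J.sat_pf_bang h₁, J.sat_know_of_sat_pf h₁⟩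
  | a6 => simp only [sat_imp, sat_or]; exact J.sat_pf_sum
  | kK =>
    simp only [sat_imp, sat_know]
    exact fun h₁ h₂ n k hn hk => h₁ n k hn hk (h₂ n k hn hk)
  | kT => exact sat_imp.2 fun h₁ => h₁ m h (J.r_refl m) hh
  | k4 => exact sat_imp.2 fun h₁ _ _ hn _ => J.sat_know_of_r (h := h) hn h₁
  | a8 => exact sat_imp.2 fun h₁ _ _ n _ hn _ k hk => h₁ n k hn hk
  | b9 =>
    simp only [sat_imp, sat_and, sat_neg]
    exact fun h₁ => ⟨fun h₂ => h₁.2.2 h₂.1, J.sat_stit_prove hh h₁, J.not_sat_box_prove hh, h₁.2.1⟩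
  | b10 => simp only [sat_imp, sat_and, sat_prove]; tauto
  | b11 =>
    simp only [sat_imp, sat_and, sat_know]
    exact fun h₁ => ⟨fun _ _ hn _ => J.sat_proven_of_re (h := h) (J.r_sub_re _ _ hn) h₁, h₁.2⟩
  | b12 => simp only [sat_imp, sat_and, sat_proven]; tauto
  | b13 =>
    simp only [sat_imp, sat_diaStit, sat_bigConjAg]
    exact J.exists_forall_not_sat_prove hh

theorem IsWeakJStit.valid_s4 (J : M.IsWeakJStit) {l : List (Pol × Form Ag)} (hne : l ≠ [])
    (hA : M.Valid (A.know.imp (Form.disjList (l.map fun p => (Form.proven p.1 p.2).neg)))) :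
    M.Valid (A.know.imp
      (Form.disjList (l.map fun p => bigConjAg fun j => (Form.prove j p.1 p.2).neg))) := by
  simp only [Valid, sat_imp, sat_disjList, List.mem_map, exists_exists_and_eq_and, sat_bigConjAg,
    sat_neg] at hA ⊢
  intro m h hh hK
  by_contra! hprove
  obtain ⟨p, hp⟩ := List.exists_mem_of_ne_nil l hne
  obtain ⟨j, hj⟩ := hprove p hp
  obtain ⟨m', hm', hlt⟩ :=
    J.exists_lt_of_notMem_actM hh (J.actC_subset_act hh hj.1) hj.2.2
  have hK' : M.Sat A.know m' h := J.sat_know_of_r (J.futureMatters _ _ hlt.1) hK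
  obtain ⟨q, hq, hnot⟩ := hA m' h ⟨hh.1, hm'⟩ hK'
  obtain ⟨i, hi⟩ := hprove q hq
  exact hnot (J.sat_proven_of_sat_prove_of_lt hh hi hlt hm')

theorem CSNormal.valid_pf {c : ℕ} (hN : M.CSNormal CS) (hmem : Form.pf (.pconst c) A ∈ CS)
    (hA : M.Valid A) : M.Valid (.pf (.pconst c) A) :=
  fun m _ _ => sat_pf.2 ⟨hN c m A hmem, fun m' h' _ => hA m' h'⟩

theorem IsWeakJStit.valid_of_mem_constSpec (J : M.IsWeakJStit) (hCS : IsConstSpec CS)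
    (hN : M.CSNormal CS) (hA : A ∈ CS) : M.Valid A := by
  induction hCS.1 A hA with
  | base c hax => exact hN.valid_pf hA (J.valid_of_ax hax)
  | @step c B hB ih =>
    have hmem : B ∈ CS := by cases hB <;> exact hCS.2 _ _ _ hA
    exact hN.valid_pf hA (ih hmem)

end PreModel

theorem soundness_general {Ag : Type} [Fintype Ag] {CS : Set (Form Ag)} (hCS : IsConstSpec CS)
    {A : Form Ag} (hA : Prov CS A) {M : PreModel Ag} (hM : M.IsWeakJStit)
    (hN : M.CSNormal CS) : M.Valid A := by
  induction hA with
  | ax hax => exact hM.valid_of_ax hax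
  | mp _ _ himp hA => exact fun m h hh => PreModel.sat_imp.1 (himp m h hh) (hA m h hh)
  | knec _ hA => exact fun _ _ _ m' h' _ hh' => hA m' h' hh'
  | s4 hne _ hA => exact hM.valid_s4 hne hA
  | rcs hmem => exact hM.valid_of_mem_constSpec hCS hN hmem

/-- Soundness of Π(CS) over CS-normal jstit models. -/
theorem soundness {Ag : Type} [Fintype Ag] [Nonempty Ag]
    (CS : Set (Form Ag)) (hCS : IsConstSpec CS) (A : Form Ag) (hA : Prov CS A) :
    ∀ M : PreModel Ag, M.IsJStit → M.CSNormal CS →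
      ∀ (m : M.W) (h : Set M.W), M.HistAt m h → M.Sat A m h :=
  fun _ hM hN => soundness_general hCS hA hM.isWeakJStit hN
end

section
/- Compactness: for every constant specification CS and every set Γ ⊆ Form^Ag, Γ is satisfiable at some moment-history pair of some CS-normal jstit model if and only if every finite subset of Γ is satisfiable at some moment-history pair of some CS-normal jstit model. -/
open Classical

/-!
Forget the tree of a jstit model and keep its moment-history pairs as the points of a flat Kripke
model. Ultraproducts of flat models satisfy Łoś's theorem, so finite satisfiability of `Γ` makes
`Γ` true at a point of an ultraproduct. The tree, which does not survive the ultraproduct, has to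
be rebuilt, and the only obstacle is the presented proofs: a proof presented at a moment-history
pair must be presented throughout all later moments of the history, while nothing can be presented
throughout a moment without having been presented before. A flat model coming from a jstit model
gives one such step; since there are only countably many proof polynomials, `ω`-saturation of the
ultraproduct along the epistemic relation leads from every point to a moment where its proofs have
become common property and no further proof is being presented. Each point can therefore be
continued for ever at such a moment. Spreading the points over a tree with time `ℚ≥0` accordingly
yields a jstit model: density of time provides the earlier moments at which the proofs common to a
moment are already present.
-/

open Filter

/-! ### Families of points and filters -/

section Families

variable {ι : Type*} {α : ι → Type*}

theorem forall_eventually_imp_iff [∀ i, Nonempty (α i)] {U : Ultrafilter ι}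
    {p q : ∀ i, α i → Prop} :
    (∀ y : ∀ i, α i, (∀ᶠ i in U, p i (y i)) → ∀ᶠ i in U, q i (y i)) ↔
      ∀ᶠ i in U, ∀ a, p i a → q i a := by
  rw [← not_iff_not]
  simp only [not_forall, ← Ultrafilter.eventually_not, exists_prop]
  exact (exists_congr fun _ => eventually_and.symm).trans
    (Filter.skolem (P := fun i a => p i a ∧ ¬ q i a)).symm

/-- This is the instance of the `ω`-saturation of ultraproducts that concerns chains of a
preorder. -/
theorem exists_forall_eventually_rel {l : Filter ι} {n : ι → ℕ} (hn : Tendsto n l atTop)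
    {r : ∀ i, α i → α i → Prop} (hrefl : ∀ i a, r i a a)
    (htrans : ∀ i {a b c}, r i a b → r i b c → r i a c)
    (x : ℕ → ∀ i, α i) (hx : ∀ k, ∀ᶠ i in l, r i (x k i) (x (k + 1) i)) :
    ∃ z : ∀ i, α i, ∀ k, ∀ᶠ i in l, r i (x k i) (z i) := by
  let IsChainUpTo (i : ι) (k : ℕ) : Prop := ∀ m < k, r i (x m i) (x (m + 1) i)
  have rel_of_le {i k m} (hk : IsChainUpTo i k) (hmk : m ≤ k) : r i (x m i) (x k i) := by
    induction k, hmk using Nat.le_induction with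
    | base => exact hrefl _ _
    | succ k _ ih => exact htrans i (ih fun a ha => hk a (by omega)) (hk k k.lt_succ_self)
  let len (i : ι) : ℕ := Nat.findGreatest (IsChainUpTo i) (n i)
  refine ⟨fun i => x (len i) i, fun k => ?_⟩
  have hchain : ∀ᶠ i in l, IsChainUpTo i k :=
    (eventually_all_finite (Set.finite_lt_nat k)).2 fun m _ => hx m
  filter_upwards [hchain, hn.eventually_ge_atTop k] with i hi hki
  exact rel_of_le (Nat.findGreatest_spec hki hi) (Nat.le_findGreatest hki hi)

end Families

theorem exists_rel_forall_rel_subset {α β : Type*} [Countable β] {r : α → α → Prop}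
    (hrefl : ∀ x, r x x) (htrans : ∀ {x y z}, r x y → r y z → r x z)
    (hchain : ∀ x : ℕ → α, (∀ k, r (x k) (x (k + 1))) → ∃ z, ∀ k, r (x k) z)
    {f : α → Set β} (hf : ∀ {x y}, r x y → f x ⊆ f y) (x : α) :
    ∃ z, r x z ∧ ∀ y, r z y → f y ⊆ f z := by
  obtain ⟨code, hcode⟩ := exists_injective_nat β
  have exists_decides (y : α) (k : ℕ) :
      ∃ y', r y y' ∧ ∀ b, code b = k → ∀ w, r y' w → b ∈ f w → b ∈ f y' := by
    by_cases H : ∃ w b, r y w ∧ code b = k ∧ b ∈ f w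
    · obtain ⟨w, b, hyw, rfl, hb⟩ := H
      exact ⟨w, hyw, fun b' hb' _ _ _ => hcode hb' ▸ hb⟩
    · exact ⟨y, hrefl y, fun b hb w hyw hbw => (H ⟨w, b, hyw, hb, hbw⟩).elim⟩
  choose next rel_next decides_next using exists_decides
  let seq : ℕ → α := fun k => k.rec x fun k y => next y k
  obtain ⟨z, hz⟩ := hchain seq fun k => rel_next _ _
  refine ⟨z, hz 0, fun y hzy b hb => ?_⟩
  have hseq : r (seq (code b + 1)) z := hz (code b + 1)
  exact hf hseq (decides_next _ _ b rfl y (htrans hseq hzy) hb)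

/-! ### Proof polynomials -/

namespace Pol

/-- A Gödel numbering of proof polynomials, which makes them countable. -/
def code : Pol → ℕ
  | pvar n => Nat.pair 0 n
  | pconst n => Nat.pair 1 n
  | sum s t => Nat.pair 2 (Nat.pair s.code t.code)
  | app s t => Nat.pair 3 (Nat.pair s.code t.code)
  | bang t => Nat.pair 4 t.code

theorem code_injective : Function.Injective code := by
  intro s
  induction s <;> intro t h <;> cases t <;> grind [code, Nat.pair_eq_pair]

instance : Countable Pol := code_injective.countable

end Pol

/-! ### Flat models -/

/-- A flat Kripke model for jstit formulas: moment-history pairs are replaced by abstract points,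
and the tree is forgotten except for the relation of lying at the same moment. The relation
`choice j` says that agent `j` makes the same choice at both points. -/
structure PointModel (Ag : Type) : Type 1 where
  Point : Type
  same : Point → Point → Prop
  choice : Ag → Point → Point → Prop
  R : Point → Point → Prop
  Re : Point → Point → Prop
  act : Point → Set Pol
  E : Point → Pol → Set (Form Ag)
  V : ℕ → Point → Prop

namespace PointModel

variable {Ag : Type}

/-- The proofs presented at every point of the moment of `x`; the counterpart of `Act_m`. -/
def actM (N : PointModel Ag) (x : N.Point) : Set Pol :=
  {t | ∀ y, N.same x y → t ∈ N.act y}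

/-- Satisfaction at a point, clause by clause as in `PreModel.Sat`. -/
def Sat (N : PointModel Ag) : Form Ag → N.Point → Prop
  | Form.var n, x => N.V n x
  | Form.and A B, x => N.Sat A x ∧ N.Sat B x
  | Form.neg A, x => ¬ N.Sat A x
  | Form.stit j A, x => ∀ y, N.choice j x y → N.Sat A y
  | Form.box A, x => ∀ y, N.same x y → N.Sat A y
  | Form.know A, x => ∀ y, N.R x y → N.Sat A y
  | Form.pf t A, x => A ∈ N.E x t ∧ ∀ y, N.Re x y → N.Sat A y
  | Form.prove j t A, x =>
      (∀ y, N.choice j x y → t ∈ N.act y) ∧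
      (A ∈ N.E x t ∧ ∀ y, N.Re x y → N.Sat A y) ∧
      t ∉ N.actM x
  | Form.proven t A, x =>
      t ∈ N.actM x ∧ (A ∈ N.E x t ∧ ∀ y, N.Re x y → N.Sat A y)

/-- The constraints on a jstit model that survive in terms of points alone. Those on presented
proofs along a history shrink to `exists_act_subset_actM`: a proof presented at a point is
presented throughout some accessible moment, namely a later one on the same history if the history
does not end there. -/
structure IsJStit (N : PointModel Ag) : Prop where
  same_equivalence : Equivalence N.same
  choice_equivalence : ∀ j, Equivalence (N.choice j)
  same_of_choice : ∀ {j x y}, N.choice j x y → N.same x y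
  indep : ∀ x (f : Ag → N.Point), (∀ j, N.same x (f j)) →
    ∃ z, N.same x z ∧ ∀ j, N.choice j (f j) z
  R_of_same : ∀ {x y}, N.same x y → N.R x y
  R_trans : ∀ {x y z}, N.R x y → N.R y z → N.R x z
  Re_of_R : ∀ {x y}, N.R x y → N.Re x y
  Re_trans : ∀ {x y z}, N.Re x y → N.Re y z → N.Re x z
  E_mono : ∀ {x y}, N.Re x y → N.E x ≤ N.E y
  E_app : ∀ {x s t A B}, Form.imp A B ∈ N.E x s → A ∈ N.E x t → B ∈ N.E x (Pol.app s t)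
  E_sum : ∀ x s t, N.E x s ∪ N.E x t ⊆ N.E x (Pol.sum s t)
  E_bang : ∀ {x t A}, A ∈ N.E x t → Form.pf t A ∈ N.E x (Pol.bang t)
  actM_mono : ∀ {x y}, N.Re x y → N.actM x ⊆ N.actM y
  exists_act_subset_actM : ∀ x, ∃ y, N.R x y ∧ N.act x ⊆ N.actM y

namespace IsJStit

variable {N : PointModel Ag} (hN : N.IsJStit) {x y : N.Point}

include hN

theorem same_refl (x : N.Point) : N.same x x := hN.same_equivalence.refl x

theorem same_symm (h : N.same x y) : N.same y x := hN.same_equivalence.symm h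

theorem R_refl (x : N.Point) : N.R x x := hN.R_of_same (hN.same_refl x)

theorem E_eq_of_same (h : N.same x y) : N.E x = N.E y :=
  le_antisymm (hN.E_mono (hN.Re_of_R (hN.R_of_same h)))
    (hN.E_mono (hN.Re_of_R (hN.R_of_same (hN.same_symm h))))

end IsJStit

end PointModel

/-! ### The points of a jstit model -/

namespace PreModel

variable {Ag : Type} {M : PreModel Ag}

/-- A moment-history pair, that is, an element of `MH(M)`. -/
structure Point (M : PreModel Ag) : Type where
  moment : M.W
  history : Set M.W
  histAt : M.HistAt moment history

/-- The flat model on the moment-history pairs of `M`. -/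
abbrev toPointModel (M : PreModel Ag) : PointModel Ag where
  Point := M.Point
  same x y := x.moment = y.moment
  choice j x y := x.moment = y.moment ∧ y.history ∈ M.Choice x.moment j x.history
  R x y := M.R x.moment y.moment
  Re x y := M.Re x.moment y.moment
  act x := M.Act x.moment x.history
  E x := M.E x.moment
  V n x := M.V n x.moment x.history

theorem forall_same_iff {x : M.Point} {P : M.Point → Prop} {Q : M.W → Set M.W → Prop}
    (hPQ : ∀ y, P y ↔ Q y.moment y.history) :
    (∀ y, M.toPointModel.same x y → P y) ↔ ∀ h, M.HistAt x.moment h → Q x.moment h := by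
  constructor
  · exact fun H h hh => (hPQ ⟨x.moment, h, hh⟩).1 (H _ rfl)
  · rintro H ⟨_, h, hh⟩ rfl
    exact (hPQ _).2 (H h hh)

theorem actM_toPointModel (x : M.Point) : M.toPointModel.actM x = M.ActM x.moment :=
  Set.ext fun t => forall_same_iff (Q := fun m h => t ∈ M.Act m h) fun _ => Iff.rfl

namespace IsJStit

variable (hM : M.IsJStit)

include hM

theorem forall_choice_iff {j : Ag} {x : M.Point} {P : M.Point → Prop}
    {Q : M.W → Set M.W → Prop} (hPQ : ∀ y, P y ↔ Q y.moment y.history) :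
    (∀ y, M.toPointModel.choice j x y → P y) ↔
      ∀ h ∈ M.Choice x.moment j x.history, Q x.moment h := by
  constructor
  · exact fun H h hh =>
      (hPQ ⟨x.moment, h, hM.choice_hist _ _ _ x.histAt h hh⟩).1 (H _ ⟨rfl, hh⟩)
  · rintro H ⟨_, h, _⟩ ⟨rfl, hc⟩
    exact (hPQ _).2 (H h hc)

theorem sat_toPointModel_iff (A : Form Ag) (x : M.Point) :
    M.toPointModel.Sat A x ↔ M.Sat A x.moment x.history := by
  have forall_sat_iff {B : Form Ag} {r : M.W → Prop}
      (ih : ∀ y, M.toPointModel.Sat B y ↔ M.Sat B y.moment y.history) :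
      (∀ y : M.Point, r y.moment → M.toPointModel.Sat B y) ↔
        ∀ m h, r m → M.HistAt m h → M.Sat B m h :=
    ⟨fun H m h hr hh => (ih ⟨m, h, hh⟩).1 (H _ hr), fun H y hy => (ih y).2 (H _ _ hy y.histAt)⟩
  induction A generalizing x with
  | var n => exact Iff.rfl
  | and A B ihA ihB => exact and_congr (ihA x) (ihB x)
  | neg A ih => exact not_congr (ih x)
  | stit j A ih => exact hM.forall_choice_iff ih
  | box A ih => exact forall_same_iff ih
  | pf t A ih => exact and_congr Iff.rfl (forall_sat_iff ih)
  | know A ih => exact forall_sat_iff ih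
  | prove j t A ih =>
    exact and_congr (hM.forall_choice_iff (Q := fun m h => t ∈ M.Act m h) fun _ => Iff.rfl)
      (and_congr (and_congr Iff.rfl (forall_sat_iff ih)) (by rw [actM_toPointModel]))
  | proven t A ih =>
    exact and_congr (by rw [actM_toPointModel]) (and_congr Iff.rfl (forall_sat_iff ih))

theorem histAt_of_le {m m' : M.W} {h : Set M.W} (hle : M.le m m') (hh : M.HistAt m' h) :
    M.HistAt m h := by
  refine ⟨hh.1, ?_⟩
  have hchain : IsChain M.le (insert m h) := by
    refine hh.1.1.insert fun e he _ => ?_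
    rcases eq_or_ne e m' with rfl | hne
    · exact Or.inl hle
    · rcases hh.1.1 he hh.2 hne with h' | h'
      · exact hM.noBackBranch _ _ _ hle h'
      · exact Or.inl (hM.le_trans _ _ _ hle h')
  rw [hh.1.2 hchain (Set.subset_insert _ _)]
  exact Set.mem_insert _ _

theorem act_subset_actM_of_lt {m m' : M.W} {h : Set M.W} (hlt : M.lt m m')
    (hh : M.HistAt m' h) : M.Act m h ⊆ M.ActM m' := by
  intro t ht g hg
  have hdiv := hM.divide m g h (hM.histAt_of_le hlt.1 hg) (hM.histAt_of_le hlt.1 hh)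
    ⟨m', hlt, hg.2, hh.2⟩
  exact hM.expand m m' g hlt hg (hdiv ▸ ht)

theorem eq_of_forall_not_lt {m : M.W} {h g : Set M.W} (hh : M.HistAt m h) (hg : M.HistAt m g)
    (hlast : ∀ m' ∈ h, ¬ M.lt m m') : h = g := by
  refine hh.1.2 hg.1.1 fun e he => ?_
  rcases eq_or_ne e m with rfl | hne
  · exact hg.2
  · rcases hh.1.1 he hh.2 hne with hle | hle
    · exact (hM.histAt_of_le hle hg).2
    · exact absurd ⟨hle, hne.symm⟩ (hlast e he)

theorem exists_act_subset_actM {m : M.W} {h : Set M.W} (hh : M.HistAt m h) :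
    ∃ m', M.R m m' ∧ M.HistAt m' h ∧ M.Act m h ⊆ M.ActM m' := by
  by_cases hlater : ∃ m' ∈ h, M.lt m m'
  · obtain ⟨m', hm', hlt⟩ := hlater
    exact ⟨m', hM.futureMatters _ _ hlt.1, ⟨hh.1, hm'⟩,
      hM.act_subset_actM_of_lt hlt ⟨hh.1, hm'⟩⟩
  · push Not at hlater
    refine ⟨m, hM.r_refl m, hh, fun t ht g hg => ?_⟩
    rwa [← hM.eq_of_forall_not_lt hh hg hlater]

theorem isJStit_toPointModel : M.toPointModel.IsJStit where
  same_equivalence := ⟨fun _ => rfl, Eq.symm, Eq.trans⟩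
  choice_equivalence j := by
    refine ⟨fun x => ⟨rfl, hM.choice_self _ _ _ x.histAt⟩, ?_, ?_⟩
    · rintro ⟨m, h, hh⟩ ⟨_, g, hg⟩ ⟨rfl, hc⟩
      refine ⟨rfl, ?_⟩
      change h ∈ M.Choice m j g
      rw [hM.choice_cells m j h hh g hc]
      exact hM.choice_self m j h hh
    · rintro ⟨m, h, hh⟩ ⟨_, g, hg⟩ ⟨_, k, hk⟩ ⟨rfl, hc⟩ ⟨rfl, hc'⟩
      refine ⟨rfl, ?_⟩
      change k ∈ M.Choice m j h
      rwa [← hM.choice_cells m j h hh g hc]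
  same_of_choice h := h.1
  indep x f hf := by
    have hhist : ∀ j, M.HistAt x.moment (f j).history := fun j => hf j ▸ (f j).histAt
    obtain ⟨g, hg⟩ := hM.indep x.moment (fun j => (f j).history) hhist
    rcases isEmpty_or_nonempty Ag with hAg | ⟨⟨j₀⟩⟩
    · exact ⟨x, rfl, isEmptyElim⟩
    · exact ⟨⟨x.moment, g, hM.choice_hist _ _ _ (hhist j₀) g (hg j₀)⟩, rfl,
        fun j => ⟨(hf j).symm, hf j ▸ hg j⟩⟩
  R_of_same {x y} h := by
    change M.R x.moment y.moment
    exact h ▸ hM.r_refl x.moment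
  R_trans := hM.r_trans _ _ _
  Re_of_R := hM.r_sub_re _ _
  Re_trans := hM.re_trans _ _ _
  E_mono h t := hM.monoEv t _ _ h
  E_app := hM.evApp _ _ _ _ _
  E_sum x := hM.evSum x.moment
  E_bang := hM.evBang _ _ _
  actM_mono {x y} h := by
    rw [actM_toPointModel, actM_toPointModel]
    exact hM.transparency _ _ h
  exists_act_subset_actM x := by
    obtain ⟨m, hR, hh, hact⟩ := hM.exists_act_subset_actM x.histAt
    exact ⟨⟨m, x.history, hh⟩, hR, by rwa [actM_toPointModel]⟩

end IsJStit

end PreModel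

/-! ### Ultraproducts of flat models -/

namespace PointModel

variable {Ag : Type}

section Ultraproduct

variable {ι : Type} (U : Ultrafilter ι) (N : ι → PointModel Ag)

/-- The ultraproduct of flat models. Families that agree `U`-almost everywhere are not
identified. -/
abbrev ultraproduct : PointModel Ag where
  Point := ∀ i, (N i).Point
  same x y := ∀ᶠ i in U, (N i).same (x i) (y i)
  choice j x y := ∀ᶠ i in U, (N i).choice j (x i) (y i)
  R x y := ∀ᶠ i in U, (N i).R (x i) (y i)
  Re x y := ∀ᶠ i in U, (N i).Re (x i) (y i)
  act x := {t | ∀ᶠ i in U, t ∈ (N i).act (x i)}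
  E x t := {A | ∀ᶠ i in U, A ∈ (N i).E (x i) t}
  V n x := ∀ᶠ i in U, (N i).V n (x i)

variable {U N} [∀ i, Nonempty (N i).Point] {x : ∀ i, (N i).Point}

theorem mem_actM_ultraproduct {t : Pol} :
    t ∈ (ultraproduct U N).actM x ↔ ∀ᶠ i in U, t ∈ (N i).actM (x i) :=
  forall_eventually_imp_iff (q := fun i y => t ∈ (N i).act y)

/-- Łoś's theorem. -/
theorem sat_ultraproduct_iff (A : Form Ag) :
    (ultraproduct U N).Sat A x ↔ ∀ᶠ i in U, (N i).Sat A (x i) := by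
  induction A generalizing x with
  | var n => exact Iff.rfl
  | and A B ihA ihB => exact (and_congr ihA ihB).trans eventually_and.symm
  | neg A ih => exact (not_congr ih).trans Ultrafilter.eventually_not.symm
  | stit j A ih | box A ih | know A ih =>
    simp only [Sat, ih]
    exact forall_eventually_imp_iff
  | pf t A ih =>
    simp only [Sat, ih, eventually_and]
    exact and_congr Iff.rfl forall_eventually_imp_iff
  | prove j t A ih =>
    simp only [Sat, ih, eventually_and, mem_actM_ultraproduct, Ultrafilter.eventually_not]
    exact and_congr (forall_eventually_imp_iff (q := fun i y => t ∈ (N i).act y))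
      (and_congr (and_congr Iff.rfl forall_eventually_imp_iff) Iff.rfl)
  | proven t A ih =>
    simp only [Sat, ih, eventually_and, mem_actM_ultraproduct]
    exact and_congr Iff.rfl (and_congr Iff.rfl forall_eventually_imp_iff)

theorem isJStit_ultraproduct (hN : ∀ i, (N i).IsJStit) : (ultraproduct U N).IsJStit where
  same_equivalence :=
    ⟨fun x => .of_forall fun i => (hN i).same_refl (x i),
      fun h => h.mono fun i => (hN i).same_symm,
      fun h h' => (h.and h').mono fun i hi => (hN i).same_equivalence.trans hi.1 hi.2⟩
  choice_equivalence j :=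
    ⟨fun x => .of_forall fun i => ((hN i).choice_equivalence j).refl (x i),
      fun h => h.mono fun i => ((hN i).choice_equivalence j).symm,
      fun h h' => (h.and h').mono fun i hi => ((hN i).choice_equivalence j).trans hi.1 hi.2⟩
  same_of_choice h := h.mono fun i => (hN i).same_of_choice
  indep x f hf := by
    have exists_cell (i : ι) : ∃ z, (N i).same (x i) z ∧
        ∀ j, (N i).same (x i) (f j i) → (N i).choice j (f j i) z := by
      obtain ⟨z, hxz, hz⟩ := (hN i).indep (x i)
        (fun j => if (N i).same (x i) (f j i) then f j i else x i) fun j => by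
          split_ifs with h
          exacts [h, (hN i).same_refl _]
      exact ⟨z, hxz, fun j hj => by simpa only [if_pos hj] using hz j⟩
    choose z hxz hz using exists_cell
    exact ⟨z, .of_forall hxz, fun j => (hf j).mono fun i hi => hz i j hi⟩
  R_of_same h := h.mono fun i => (hN i).R_of_same
  R_trans h h' := (h.and h').mono fun i hi => (hN i).R_trans hi.1 hi.2
  Re_of_R h := h.mono fun i => (hN i).Re_of_R
  Re_trans h h' := (h.and h').mono fun i hi => (hN i).Re_trans hi.1 hi.2
  E_mono h t A hA := (h.and hA).mono fun i hi => (hN i).E_mono hi.1 t hi.2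
  E_app h h' := (h.and h').mono fun i hi => (hN i).E_app hi.1 hi.2
  E_sum x s t A hA := by
    rcases hA with hA | hA
    · exact hA.mono fun i hi => (hN i).E_sum _ _ _ (Or.inl hi)
    · exact hA.mono fun i hi => (hN i).E_sum _ _ _ (Or.inr hi)
  E_bang h := h.mono fun i => (hN i).E_bang
  actM_mono h t ht :=
    mem_actM_ultraproduct.2
      ((h.and (mem_actM_ultraproduct.1 ht)).mono fun i hi => (hN i).actM_mono hi.1 hi.2)
  exists_act_subset_actM x := by
    choose y hxy hy using fun i => (hN i).exists_act_subset_actM (x i)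
    exact ⟨y, .of_forall hxy, fun t ht => mem_actM_ultraproduct.2 (ht.mono fun i hi => hy i hi)⟩

end Ultraproduct

/-- The moment of `y` is accessible from `x`; the proofs presented at `x` have become common
property there, and no new proof is being presented. -/
structure SettlesAt (N : PointModel Ag) (x y : N.Point) : Prop where
  rel : N.R x y
  act_subset : N.act x ⊆ N.actM y
  settled : ∀ z, N.same y z → N.act z ⊆ N.actM y

theorem IsJStit.exists_settlesAt {N : PointModel Ag} (hN : N.IsJStit)
    (hchain : ∀ x : ℕ → N.Point, (∀ k, N.R (x k) (x (k + 1))) → ∃ z, ∀ k, N.R (x k) z)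
    (x : N.Point) : ∃ y, N.SettlesAt x y := by
  obtain ⟨y, hxy, hy⟩ := hN.exists_act_subset_actM x
  obtain ⟨z, hyz, hz⟩ := exists_rel_forall_rel_subset hN.R_refl hN.R_trans hchain
    (fun h => hN.actM_mono (hN.Re_of_R h)) y
  refine ⟨z, hN.R_trans hxy hyz, hy.trans (hN.actM_mono (hN.Re_of_R hyz)), fun w hzw => ?_⟩
  obtain ⟨w', hww', hw'⟩ := hN.exists_act_subset_actM w
  exact hw'.trans (hz w' (hN.R_trans (hN.R_of_same hzw) hww'))

theorem exists_settlesAt_ultraproduct {ι : Type} {U : Ultrafilter ι} {N : ι → PointModel Ag}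
    [∀ i, Nonempty (N i).Point] (hN : ∀ i, (N i).IsJStit) {n : ι → ℕ} (hn : Tendsto n U atTop)
    (x : (ultraproduct U N).Point) : ∃ y, (ultraproduct U N).SettlesAt x y :=
  (isJStit_ultraproduct hN).exists_settlesAt
    (exists_forall_eventually_rel hn (fun i => (hN i).R_refl) fun i _ _ _ => (hN i).R_trans) x

end PointModel

/-! ### The tree of paths -/

/-- A node of the tree of paths `T → P`: a time together with the values of a path strictly before
it, the remaining values being normalised to `default`. -/
@[ext]
structure Node (T P : Type*) [LinearOrder T] [Inhabited P] where
  time : T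
  path : T → P
  path_of_le : ∀ i, time ≤ i → path i = default

namespace Node

variable {T P : Type*} [LinearOrder T] [Inhabited P]

instance : PartialOrder (Node T P) where
  le a b := a.time ≤ b.time ∧ ∀ i < a.time, a.path i = b.path i
  le_refl _ := ⟨le_rfl, fun _ _ => rfl⟩
  le_trans _ _ _ hab hbc :=
    ⟨hab.1.trans hbc.1, fun i hi => (hab.2 i hi).trans (hbc.2 i (hi.trans_le hab.1))⟩
  le_antisymm a b hab hba := by
    have htime := hab.1.antisymm hba.1
    refine Node.ext htime (funext fun i => ?_)
    rcases lt_or_ge i a.time with hi | hi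
    · exact hab.2 i hi
    · rw [a.path_of_le i hi, b.path_of_le i (htime ▸ hi)]

instance [OrderBot T] : OrderBot (Node T P) where
  bot := ⟨⊥, fun _ => default, fun _ _ => rfl⟩
  bot_le _ := ⟨bot_le, fun _ hi => (not_lt_bot hi).elim⟩

theorem path_eq_of_le {a b : Node T P} (h : a ≤ b) {i : T} (hi : i < a.time) :
    a.path i = b.path i :=
  h.2 i hi

theorem time_lt_time {a b : Node T P} (h : a < b) : a.time < b.time := by
  refine lt_of_le_of_ne h.le.1 fun htime => h.not_ge ⟨htime.ge, fun i hi => ?_⟩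
  exact (path_eq_of_le h.le (htime ▸ hi)).symm

/-- The node at time `k` of the path `σ`. -/
def restrict (σ : T → P) (k : T) : Node T P where
  time := k
  path i := if i < k then σ i else default
  path_of_le _ hi := if_neg hi.not_gt

theorem path_restrict {σ : T → P} {i k : T} (hi : i < k) : (restrict σ k).path i = σ i :=
  if_pos hi

/-- The nodes of the path `σ`. -/
def branch (σ : T → P) : Set (Node T P) :=
  {a | ∀ i < a.time, a.path i = σ i}

theorem restrict_mem_branch (σ : T → P) (k : T) : restrict σ k ∈ branch σ :=
  fun _ => path_restrict

theorem mem_branch_path_of_le {a b : Node T P} (h : a ≤ b) : a ∈ branch b.path :=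
  h.2

theorem le_of_mem_branch {σ : T → P} {a b : Node T P} (ha : a ∈ branch σ) (hb : b ∈ branch σ)
    (htime : a.time ≤ b.time) : a ≤ b :=
  ⟨htime, fun i hi => (ha i hi).trans (hb i (hi.trans_le htime)).symm⟩

theorem le_total_of_mem_branch {σ : T → P} {a b : Node T P} (ha : a ∈ branch σ)
    (hb : b ∈ branch σ) : a ≤ b ∨ b ≤ a :=
  (le_total a.time b.time).imp (le_of_mem_branch ha hb) (le_of_mem_branch hb ha)

theorem isMaxChain_branch [NoMaxOrder T] (σ : T → P) : IsMaxChain (· ≤ ·) (branch σ) := by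
  refine ⟨fun a ha b hb _ => le_total_of_mem_branch ha hb, fun s hs hsub => ?_⟩
  refine hsub.antisymm fun a ha i hi => ?_
  obtain ⟨k, hk⟩ := exists_gt a.time
  rcases hs.total ha (hsub (restrict_mem_branch σ k)) with hle | hle
  · rw [path_eq_of_le hle hi, path_restrict (hi.trans hk)]
  · exact (hle.1.not_gt hk).elim

/-- The value at `i` of the path followed by the chain `h`. -/
noncomputable def direction (h : Set (Node T P)) (i : T) : P :=
  if H : ∃ a ∈ h, i < a.time then H.choose.path i else default

theorem direction_eq {h : Set (Node T P)} (hh : IsChain (· ≤ ·) h) {a : Node T P} (ha : a ∈ h)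
    {i : T} (hi : i < a.time) : direction h i = a.path i := by
  have H : ∃ a ∈ h, i < a.time := ⟨a, ha, hi⟩
  rw [direction, dif_pos H]
  rcases hh.total H.choose_spec.1 ha with hle | hle
  · exact path_eq_of_le hle H.choose_spec.2
  · exact (path_eq_of_le hle hi).symm

theorem direction_branch [NoMaxOrder T] (σ : T → P) (i : T) : direction (branch σ) i = σ i := by
  obtain ⟨k, hk⟩ := exists_gt i
  rw [direction_eq (isMaxChain_branch σ).1 (restrict_mem_branch σ k) hk, path_restrict hk]

end Node

/-! ### Unravelling a flat model into a tree -/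

namespace PointModel

open Node

variable {Ag : Type} {N : PointModel Ag}

/-- The point `y` if it lies at the moment of `x`, and `x` otherwise. -/
noncomputable def select (N : PointModel Ag) (x y : N.Point) : N.Point :=
  if N.same x y then y else x

theorem select_of_same {x y : N.Point} (h : N.same x y) : N.select x y = y := if_pos h

theorem IsJStit.same_select (hN : N.IsJStit) (x y : N.Point) : N.same x (N.select x y) := by
  rw [select]
  split_ifs with h
  exacts [h, hN.same_refl x]

section Unravelling

variable [Inhabited N.Point] (settle : N.Point → N.Point)

/-- A point of `N` whose moment the node `m` copies. The value `m.path 0` is copied up to time `1`,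
`m.path 1` selects a point of its moment, and after time `1` the tree copies a moment at which that
point settles. -/
noncomputable def label (m : Node ℚ≥0 N.Point) : N.Point :=
  if m.time ≤ 1 then m.path 0 else settle (N.select (m.path 0) (m.path 1))

/-- The point of `N` copied by the pair `(m, h)`: the values of a path also encode which point of
the moment is realised by the histories that continue along it. -/
noncomputable def pointAt (m : Node ℚ≥0 N.Point) (h : Set (Node ℚ≥0 N.Point)) : N.Point :=
  N.select (label settle m) (direction h m.time)

/-- Accessibility between nodes induced by the accessibility `r` between points. The root copies
nothing and sees everything, and the nodes from time `1` on, which are the faithful copies, see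
each other only. -/
def lift (r : N.Point → N.Point → Prop) (m m' : Node ℚ≥0 N.Point) : Prop :=
  (0 < m.time → 0 < m'.time ∧ r (label settle m) (label settle m')) ∧ (1 ≤ m.time → 1 ≤ m'.time)

/-- The jstit model obtained by spreading `N` over the tree of paths. The nodes at times in the
open interval `(0, 1)` are there to have presented, before time `1`, what is common property at
time `1`. -/
noncomputable abbrev unravelling : PreModel Ag where
  W := Node ℚ≥0 N.Point
  le := (· ≤ ·)
  Choice m j h := {g | (IsMaxChain (· ≤ ·) g ∧ m ∈ g) ∧
    N.choice j (pointAt settle m h) (pointAt settle m g)}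
  Act m h := {t | (0 < m.time ∧ t ∈ N.actM (label settle m)) ∨
    (1 ≤ m.time ∧ t ∈ N.act (pointAt settle m h))}
  R := lift settle N.R
  Re := lift settle N.Re
  E m t := {A | ∀ x, (0 < m.time → x = label settle m) → A ∈ N.E x t}
  V n m h := N.V n (pointAt settle m h)

variable {settle} {m m' : Node ℚ≥0 N.Point} {h g : Set (Node ℚ≥0 N.Point)}

theorem lift_refl {r : N.Point → N.Point → Prop} (hr : ∀ x, r x x) : lift settle r m m :=
  ⟨fun hpos => ⟨hpos, hr _⟩, id⟩

theorem lift_trans {r : N.Point → N.Point → Prop} (hr : ∀ {x y z}, r x y → r y z → r x z)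
    {m₁ m₂ m₃ : Node ℚ≥0 N.Point} (h₁₂ : lift settle r m₁ m₂) (h₂₃ : lift settle r m₂ m₃) :
    lift settle r m₁ m₃ :=
  ⟨fun hpos => (h₂₃.1 (h₁₂.1 hpos).1).imp_right (hr (h₁₂.1 hpos).2), h₂₃.2 ∘ h₁₂.2⟩

theorem label_eq_of_le (hle : m ≤ m') (hpos : 0 < m.time) (hlate : 1 < m'.time → 1 < m.time) :
    label settle m = label settle m' := by
  have h0 := path_eq_of_le hle hpos
  rcases le_or_gt m.time 1 with hm | hm
  · rw [label, label, if_pos hm, if_pos (not_lt.1 fun h => hm.not_gt (hlate h)), h0]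
  · rw [label, label, if_neg hm.not_ge, if_neg (hm.trans_le hle.1).not_ge, h0,
      path_eq_of_le hle hm]

theorem pointAt_eq_of_undiv (hh : (unravelling settle).HistAt m h)
    (hg : (unravelling settle).HistAt m g) (hdiv : (unravelling settle).Undiv m h g) :
    pointAt settle m h = pointAt settle m g := by
  obtain ⟨m', hlt, hm'h, hm'g⟩ := hdiv
  have htime := time_lt_time (lt_of_le_of_ne hlt.1 hlt.2)
  rw [pointAt, pointAt, direction_eq hh.1.1 hm'h htime, direction_eq hg.1.1 hm'g htime]

theorem exists_histAt_pointAt_eq (m : Node ℚ≥0 N.Point) {y : N.Point}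
    (hy : N.same (label settle m) y) :
    ∃ h, (unravelling settle).HistAt m h ∧ pointAt settle m h = y := by
  refine ⟨branch (Function.update m.path m.time y), ⟨isMaxChain_branch _, fun i hi => ?_⟩, ?_⟩
  · rw [Function.update_of_ne hi.ne]
  · rw [pointAt, direction_branch, Function.update_self, select_of_same hy]

namespace IsJStit

variable (hN : N.IsJStit)

include hN

theorem same_label_pointAt (m : Node ℚ≥0 N.Point) (h : Set (Node ℚ≥0 N.Point)) :
    N.same (label settle m) (pointAt settle m h) :=
  hN.same_select _ _

theorem exists_pointAt_eq (settle : N.Point → N.Point) (y : N.Point) :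
    ∃ m h, (unravelling settle).HistAt m h ∧ 1 ≤ m.time ∧ label settle m = y ∧
      pointAt settle m h = y := by
  let m : Node ℚ≥0 N.Point := restrict (fun _ => y) 1
  have hlabel : label settle m = y := by
    rw [label, if_pos (show m.time ≤ 1 from le_rfl), path_restrict one_pos]
  obtain ⟨h, hh, hpoint⟩ :=
    exists_histAt_pointAt_eq (settle := settle) m (hlabel.symm ▸ hN.same_refl y)
  exact ⟨m, h, hh, le_rfl, hlabel, hpoint⟩

theorem mem_actM_unravelling {t : Pol} :
    t ∈ (unravelling settle).ActM m ↔ 0 < m.time ∧ t ∈ N.actM (label settle m) := by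
  refine ⟨fun ht => ?_, fun ht h _ => Or.inl ht⟩
  have hpos : 0 < m.time := by
    obtain ⟨h, hh, -⟩ := exists_histAt_pointAt_eq m (hN.same_refl (label settle m))
    exact (ht h hh).elim And.left fun H => one_pos.trans_le H.1
  refine ⟨hpos, fun y hy => ?_⟩
  obtain ⟨h, hh, rfl⟩ := exists_histAt_pointAt_eq m hy
  exact (ht h hh).elim (fun H => H.2 _ hy) And.right

section Settling

variable (hsettle : ∀ x, N.SettlesAt x (settle x))

include hsettle

theorem R_label_of_le (hle : m ≤ m') (hpos : 0 < m.time) :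
    N.R (label settle m) (label settle m') := by
  by_cases hlate : 1 < m'.time → 1 < m.time
  · exact label_eq_of_le (settle := settle) hle hpos hlate ▸ hN.R_refl _
  · push Not at hlate
    rw [label, label, if_pos hlate.2, if_neg hlate.1.not_ge, path_eq_of_le hle hpos]
    exact hN.R_trans (hN.R_of_same (hN.same_select _ _)) (hsettle _).rel

theorem act_pointAt_subset_of_lt (hlt : m < m') (hh : (unravelling settle).HistAt m' h)
    (hm : 1 ≤ m.time) : N.act (pointAt settle m h) ⊆ N.actM (label settle m') := by
  have hm' : ¬ m'.time ≤ 1 := (hm.trans_lt (time_lt_time hlt)).not_ge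
  rcases hm.eq_or_lt with hm | hm
  · rw [pointAt, direction_eq hh.1.1 hh.2 (time_lt_time hlt), label, label, if_pos hm.ge,
      if_neg hm', ← hm, path_eq_of_le hlt.le (hm ▸ one_pos)]
    exact (hsettle _).act_subset
  · have hsame := hN.same_label_pointAt (settle := settle) m h
    rw [label_eq_of_le hlt.le (one_pos.trans hm) fun _ => hm, label, if_neg hm'] at hsame
    rw [label, if_neg hm']
    exact (hsettle _).settled _ hsame

theorem act_unravelling_subset_of_lt (hlt : m < m') (hh : (unravelling settle).HistAt m' h) :
    (unravelling settle).Act m h ⊆ (unravelling settle).ActM m' := by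
  rintro t (⟨hpos, ht⟩ | ⟨hm, ht⟩)
  · exact hN.mem_actM_unravelling.2 ⟨hpos.trans (time_lt_time hlt),
      hN.actM_mono (hN.Re_of_R (hN.R_label_of_le hsettle hlt.le hpos)) ht⟩
  · exact hN.mem_actM_unravelling.2 ⟨one_pos.trans_le (hm.trans hlt.le.1),
      hN.act_pointAt_subset_of_lt hsettle hlt hh hm ht⟩

end Settling

theorem exists_lt_mem_act {t : Pol} (ht : t ∈ (unravelling settle).ActM m) :
    ∃ m' h, m' < m ∧ (unravelling settle).HistAt m h ∧ t ∈ (unravelling settle).Act m' h := by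
  obtain ⟨hpos, ht⟩ := hN.mem_actM_unravelling.1 ht
  obtain ⟨k, hk, hkm, hlate⟩ : ∃ k, 0 < k ∧ k < m.time ∧ (1 < m.time → 1 < k) := by
    by_cases hm : 1 < m.time
    · obtain ⟨k, hk, hkm⟩ := exists_between hm
      exact ⟨k, one_pos.trans hk, hkm, fun _ => hk⟩
    · obtain ⟨k, hk, hkm⟩ := exists_between hpos
      exact ⟨k, hk, hkm, fun h => (hm h).elim⟩
  have hle : restrict m.path k ≤ m := ⟨hkm.le, fun _ => path_restrict⟩
  obtain ⟨h, hh, -⟩ := exists_histAt_pointAt_eq m (hN.same_refl (label settle m))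
  refine ⟨restrict m.path k, h, lt_of_le_of_ne hle fun heq => hkm.ne (congrArg time heq), hh,
    Or.inl ⟨hk, ?_⟩⟩
  rwa [label_eq_of_le hle hk hlate]

theorem isJStit_unravelling (hsettle : ∀ x, N.SettlesAt x (settle x)) :
    (unravelling settle).IsJStit where
  nonempty := ⟨(⊥ : Node ℚ≥0 N.Point)⟩
  le_refl := le_refl
  le_trans _ _ _ := le_trans
  le_antisymm _ _ := le_antisymm
  histConn _ _ := ⟨(⊥ : Node ℚ≥0 N.Point), bot_le, bot_le⟩
  noBackBranch _ _ _ h₁ h₂ :=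
    le_total_of_mem_branch (mem_branch_path_of_le h₁) (mem_branch_path_of_le h₂)
  choice_self _ j _ hh := ⟨hh, (hN.choice_equivalence j).refl _⟩
  choice_hist _ _ _ _ _ hg := hg.1
  choice_cells _ j _ _ g hg := Set.ext fun k => and_congr_right fun _ =>
    ⟨(hN.choice_equivalence j).trans hg.2,
      (hN.choice_equivalence j).trans ((hN.choice_equivalence j).symm hg.2)⟩
  noChoiceUndiv m j h g hh hg hdiv := by
    simp only [pointAt_eq_of_undiv hh hg hdiv]
  indep m f _ := by
    obtain ⟨z, hz, hchoice⟩ := hN.indep (label settle m) (fun j => pointAt settle m (f j))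
      fun j => hN.same_label_pointAt m (f j)
    obtain ⟨h, hh, rfl⟩ := exists_histAt_pointAt_eq m hz
    exact ⟨h, fun j => ⟨hh, hchoice j⟩⟩
  r_refl _ := lift_refl hN.R_refl
  r_trans _ _ _ := lift_trans (r := N.R) hN.R_trans
  re_refl _ := lift_refl fun x => hN.Re_of_R (hN.R_refl x)
  re_trans _ _ _ := lift_trans (r := N.Re) hN.Re_trans
  r_sub_re _ _ hR := ⟨fun hpos => (hR.1 hpos).imp_right hN.Re_of_R, hR.2⟩
  monoEv t m m' hRe A hA x hx := by
    by_cases hpos : 0 < m.time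
    · obtain ⟨hpos', hRe⟩ := hRe.1 hpos
      exact hx hpos' ▸ hN.E_mono hRe t (hA _ fun _ => rfl)
    · exact hA x fun h => (hpos h).elim
  evApp _ _ _ _ _ hAB hA x hx := hN.E_app (hAB x hx) (hA x hx)
  evSum _ _ _ A hA x hx := hN.E_sum _ _ _ (hA.imp (fun H => H x hx) fun H => H x hx)
  evBang _ _ _ hA x hx := hN.E_bang (hA x hx)
  expand m' m h hlt hh t ht :=
    hN.act_unravelling_subset_of_lt hsettle (lt_of_le_of_ne hlt.1 hlt.2) hh ht h hh
  noNew m t ht := by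
    obtain ⟨m', h, hlt, hh, ht⟩ := hN.exists_lt_mem_act ht
    exact ⟨m', h, ⟨hlt.le, hlt.ne⟩, hh, ht⟩
  divide m h g hh hg hdiv := by
    simp only [pointAt_eq_of_undiv hh hg hdiv]
  futureMatters m m' hle :=
    ⟨fun hpos => ⟨hpos.trans_le hle.1, hN.R_label_of_le hsettle hle hpos⟩, hle.1.trans'⟩
  transparency m m' hRe t ht := by
    rw [hN.mem_actM_unravelling] at ht ⊢
    exact (hRe.1 ht.1).imp_right fun H => hN.actM_mono H ht.2

theorem forall_lift_iff {r : N.Point → N.Point → Prop}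
    (r_of_same : ∀ {x y}, N.same x y → r x y) (r_trans : ∀ {x y z}, r x y → r y z → r x z)
    {P : N.Point → Prop} {Q : Node ℚ≥0 N.Point → Set (Node ℚ≥0 N.Point) → Prop}
    (hQP : ∀ m h, 1 ≤ m.time → (Q m h ↔ P (pointAt settle m h))) (hm : 1 ≤ m.time) :
    (∀ m' h', lift settle r m m' → (unravelling settle).HistAt m' h' → Q m' h') ↔
      ∀ y, r (pointAt settle m h) y → P y := by
  have hsame (m h) := hN.same_label_pointAt (settle := settle) m h
  constructor
  · intro H y hy
    obtain ⟨m', h', hh', hm', hlabel, rfl⟩ := hN.exists_pointAt_eq settle y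
    exact (hQP m' h' hm').1
      (H m' h' ⟨fun _ => ⟨one_pos.trans_le hm', hlabel ▸ r_trans (r_of_same (hsame m h)) hy⟩,
        fun _ => hm'⟩ hh')
  · intro H m' h' hlift _
    have hr := (hlift.1 (one_pos.trans_le hm)).2
    exact (hQP m' h' (hlift.2 hm)).2
      (H _ (r_trans (r_of_same (hN.same_symm (hsame m h))) (r_trans hr (r_of_same (hsame m' h')))))

theorem mem_E_unravelling_of_pos {t : Pol} {A : Form Ag} (hpos : 0 < m.time) :
    A ∈ (unravelling settle).E m t ↔ A ∈ N.E (pointAt settle m h) t := by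
  rw [← hN.E_eq_of_same (hN.same_label_pointAt m h)]
  exact ⟨fun H => H _ fun _ => rfl, fun H x hx => hx hpos ▸ H⟩

theorem forall_choice_unravelling_iff {j : Ag} {P : N.Point → Prop}
    {Q : Set (Node ℚ≥0 N.Point) → Prop} (hQP : ∀ g, Q g ↔ P (pointAt settle m g)) :
    (∀ g ∈ (unravelling settle).Choice m j h, Q g) ↔
      ∀ y, N.choice j (pointAt settle m h) y → P y := by
  refine ⟨fun H y hy => ?_, fun H g hg => (hQP g).2 (H _ hg.2)⟩
  obtain ⟨g, hg, rfl⟩ := exists_histAt_pointAt_eq m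
    (hN.same_equivalence.trans (hN.same_label_pointAt m h) (hN.same_of_choice hy))
  exact (hQP g).1 (H g ⟨hg, hy⟩)

theorem forall_histAt_unravelling_iff {P : N.Point → Prop}
    {Q : Set (Node ℚ≥0 N.Point) → Prop} (hQP : ∀ g, Q g ↔ P (pointAt settle m g)) :
    (∀ g, (unravelling settle).HistAt m g → Q g) ↔
      ∀ y, N.same (pointAt settle m h) y → P y := by
  have hsame := hN.same_label_pointAt (settle := settle) m
  refine ⟨fun H y hy => ?_, fun H g _ => (hQP g).2
    (H _ (hN.same_equivalence.trans (hN.same_symm (hsame h)) (hsame g)))⟩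
  obtain ⟨g, hg, rfl⟩ := exists_histAt_pointAt_eq m (hN.same_equivalence.trans (hsame h) hy)
  exact (hQP g).1 (H g hg)

theorem mem_act_unravelling_of_one_le {t : Pol} (hm : 1 ≤ m.time) :
    t ∈ (unravelling settle).Act m h ↔ t ∈ N.act (pointAt settle m h) :=
  ⟨fun H => H.elim (fun H => H.2 _ (hN.same_label_pointAt m h)) And.right,
    fun H => Or.inr ⟨hm, H⟩⟩

theorem mem_actM_unravelling_of_one_le {t : Pol} (hm : 1 ≤ m.time) :
    t ∈ (unravelling settle).ActM m ↔ t ∈ N.actM (pointAt settle m h) :=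
  hN.forall_histAt_unravelling_iff (P := fun y => t ∈ N.act y)
    fun _ => hN.mem_act_unravelling_of_one_le hm

theorem sat_unravelling_iff (A : Form Ag) (m : Node ℚ≥0 N.Point) (h : Set (Node ℚ≥0 N.Point))
    (hm : 1 ≤ m.time) : (unravelling settle).Sat A m h ↔ N.Sat A (pointAt settle m h) := by
  have sat_pf_iff (t : Pol) {B : Form Ag}
      (ih : ∀ m h, 1 ≤ m.time → ((unravelling settle).Sat B m h ↔ N.Sat B (pointAt settle m h)))
      (m h) (hm : 1 ≤ m.time) : (unravelling settle).Sat (Form.pf t B) m h ↔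
        N.Sat (Form.pf t B) (pointAt settle m h) :=
    and_congr (hN.mem_E_unravelling_of_pos (one_pos.trans_le hm))
      (hN.forall_lift_iff (r := N.Re) (fun h => hN.Re_of_R (hN.R_of_same h)) hN.Re_trans ih hm)
  induction A generalizing m h with
  | var n => exact Iff.rfl
  | and A B ihA ihB => exact and_congr (ihA m h hm) (ihB m h hm)
  | neg A ih => exact not_congr (ih m h hm)
  | stit j A ih => exact hN.forall_choice_unravelling_iff fun g => ih m g hm
  | box A ih => exact hN.forall_histAt_unravelling_iff fun g => ih m g hm
  | pf t A ih => exact sat_pf_iff t ih m h hm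
  | know A ih => exact hN.forall_lift_iff (r := N.R) hN.R_of_same hN.R_trans ih hm
  | prove j t A ih =>
    exact and_congr (hN.forall_choice_unravelling_iff (P := fun y => t ∈ N.act y)
        fun _ => hN.mem_act_unravelling_of_one_le hm)
      (and_congr (sat_pf_iff t ih m h hm) (not_congr (hN.mem_actM_unravelling_of_one_le hm)))
  | proven t A ih =>
    exact and_congr (hN.mem_actM_unravelling_of_one_le hm) (sat_pf_iff t ih m h hm)

end IsJStit

end Unravelling

theorem IsJStit.exists_preModel_sat (hN : N.IsJStit) (hsettle : ∀ x, ∃ y, N.SettlesAt x y)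
    {𝓔 : Pol → Set (Form Ag)} (hE : ∀ x, 𝓔 ≤ N.E x) (x : N.Point) :
    ∃ (M : PreModel Ag) (m : M.W) (h : Set M.W), M.IsJStit ∧ (∀ m', 𝓔 ≤ M.E m') ∧
      M.HistAt m h ∧ ∀ A, M.Sat A m h ↔ N.Sat A x := by
  choose settle hsettle using hsettle
  let _ : Inhabited N.Point := ⟨x⟩
  obtain ⟨m, h, hh, hm, -, hx⟩ := hN.exists_pointAt_eq settle x
  exact ⟨unravelling settle, m, h, hN.isJStit_unravelling hsettle,
    fun m' t A hA x _ => hE x t hA, hh, fun A => hx ▸ hN.sat_unravelling_iff A m h hm⟩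

end PointModel

/-! ### Compactness -/

/-- The evidence that a constant specification prescribes at every moment. -/
def constEvidence {Ag : Type} (CS : Set (Form Ag)) (t : Pol) : Set (Form Ag) :=
  {A | ∃ c, t = Pol.pconst c ∧ Form.pf (Pol.pconst c) A ∈ CS}

theorem PreModel.csNormal_iff {Ag : Type} [Fintype Ag] {M : PreModel Ag} {CS : Set (Form Ag)} :
    M.CSNormal CS ↔ ∀ m, constEvidence CS ≤ M.E m := by
  constructor
  · rintro H m _ A ⟨c, rfl, hA⟩
    exact H c m A hA
  · exact fun H c m A hA => H m (Pol.pconst c) ⟨c, rfl, hA⟩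

theorem compactness_general {Ag : Type} (𝓔 : Pol → Set (Form Ag)) (Γ : Set (Form Ag)) :
    (∃ (M : PreModel Ag) (m : M.W) (h : Set M.W),
      M.IsJStit ∧ (∀ m', 𝓔 ≤ M.E m') ∧ M.HistAt m h ∧ ∀ A ∈ Γ, M.Sat A m h) ↔
    (∀ Γ₀ : Finset (Form Ag), ↑Γ₀ ⊆ Γ →
      ∃ (M : PreModel Ag) (m : M.W) (h : Set M.W),
        M.IsJStit ∧ (∀ m', 𝓔 ≤ M.E m') ∧ M.HistAt m h ∧ ∀ A ∈ Γ₀, M.Sat A m h) := by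
  constructor
  · rintro ⟨M, m, h, hM, hE, hh, hsat⟩ Γ₀ hΓ₀
    exact ⟨M, m, h, hM, hE, hh, fun A hA => hsat A (hΓ₀ hA)⟩
  intro hfin
  choose M m h hM hE hh hsat using fun i : Finset (Form Ag) × ℕ =>
    hfin {A ∈ i.1 | A ∈ Γ} fun A hA => (Finset.mem_filter.1 hA).2
  let U : Ultrafilter (Finset (Form Ag) × ℕ) := Ultrafilter.of atTop
  have hU : (U : Filter (Finset (Form Ag) × ℕ)) ≤ atTop := Ultrafilter.of_le atTop
  have hsnd : Tendsto Prod.snd (U : Filter (Finset (Form Ag) × ℕ)) atTop := by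
    rw [← prod_atTop_atTop_eq] at hU
    exact tendsto_snd.mono_left hU
  let x (i) : (M i).Point := ⟨m i, h i, hh i⟩
  have : ∀ i, Nonempty (M i).Point := fun i => ⟨x i⟩
  have hN (i) := (hM i).isJStit_toPointModel
  obtain ⟨M', m', h', hM', hE', hh', hsat'⟩ :=
    (PointModel.isJStit_ultraproduct (U := U) hN).exists_preModel_sat
      (PointModel.exists_settlesAt_ultraproduct hN hsnd)
      (fun y t A hA => .of_forall fun i => hE i (y i).moment t hA) x
  refine ⟨M', m', h', hM', hE', hh', fun A hA =>
    (hsat' A).2 ((PointModel.sat_ultraproduct_iff A).2 ?_)⟩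
  filter_upwards [hU (eventually_ge_atTop ({A}, 0))] with i hi
  have hAi : A ∈ i.1 := hi.1 (Finset.mem_singleton_self A)
  exact ((hM i).sat_toPointModel_iff A (x i)).2 (hsat i A (Finset.mem_filter.2 ⟨hAi, hA⟩))

/-- Compactness: Γ is satisfiable in a CS-normal jstit model iff
every finite subset of Γ is. -/
theorem compactness {Ag : Type} [Fintype Ag] [Nonempty Ag]
    (CS : Set (Form Ag)) (hCS : IsConstSpec CS) (Γ : Set (Form Ag)) :
    (∃ (M : PreModel Ag) (m : M.W) (h : Set M.W),
        M.IsJStit ∧ M.CSNormal CS ∧ M.HistAt m h ∧ ∀ A ∈ Γ, M.Sat A m h) ↔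
    (∀ Γ₀ : Finset (Form Ag), ↑Γ₀ ⊆ Γ →
      ∃ (M : PreModel Ag) (m : M.W) (h : Set M.W),
        M.IsJStit ∧ M.CSNormal CS ∧ M.HistAt m h ∧ ∀ A ∈ Γ₀, M.Sat A m h) := by
  simpa only [PreModel.csNormal_iff] using compactness_general (constEvidence CS) Γ
end

section
/- Alternative axiomatization: let CS be a constant specification and let Π'(CS) be obtained from Π(CS) by replacing the rule (S4) with the axiom scheme (A_S4): K(¬Proven(t1,B1) ∨ … ∨ ¬Proven(tn,Bn)) → (⋀_{j∈Ag}¬Prove(j,t1,B1) ∨ … ∨ ⋀_{j∈Ag}¬Prove(j,tn,Bn)) for arbitrary t1,…,tn ∈ Pol and B1,…,Bn ∈ Form^Ag. Then for every A ∈ Form^Ag, A is provable in Π(CS) if and only if A is provable in Π'(CS). -/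
open Classical

/-! Since `K` is S4, an implication `K A → D` lifts to `K A → K D`. Composing with (A_S4) for `D`
gives the conclusion of the rule (S4). Conversely, (A_S4) for `D` is the rule (S4) applied to the
reflexivity axiom `K D → D`. -/

section Equivalence

variable {Ag : Type} [Fintype Ag] {CS : Set (Form Ag)} {A B C : Form Ag}

namespace Prov'

theorem imp_trans (hAB : Prov' CS (A.imp B)) (hBC : Prov' CS (B.imp C)) :
    Prov' CS (A.imp C) :=
  have hABC : Prov' CS (A.imp (B.imp C)) := .mp (.ax (.pl1 _ A)) hBC
  .mp (.mp (.ax (.pl2 A B C)) hABC) hAB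

theorem know_imp_know (h : Prov' CS (A.imp B)) : Prov' CS (A.know.imp B.know) :=
  .mp (.ax (.kK A B)) (.knec h)

theorem know_imp_know_of_know_imp (h : Prov' CS (A.know.imp B)) :
    Prov' CS (A.know.imp B.know) :=
  imp_trans (.ax (.k4 A)) (know_imp_know h)

theorem s4 {l : List (Pol × Form Ag)} (hne : l ≠ [])
    (h : Prov' CS (A.know.imp (Form.disjList (l.map fun p => (Form.proven p.1 p.2).neg)))) :
    Prov' CS (A.know.imp
      (Form.disjList (l.map fun p => bigConjAg fun j => (Form.prove j p.1 p.2).neg))) :=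
  imp_trans (know_imp_know_of_know_imp h) (.as4 l hne)

end Prov'

theorem Prov.as4 {l : List (Pol × Form Ag)} (hne : l ≠ []) :
    Prov CS ((Form.disjList (l.map fun p => (Form.proven p.1 p.2).neg)).know.imp
      (Form.disjList (l.map fun p => bigConjAg fun j => (Form.prove j p.1 p.2).neg))) :=
  .s4 hne (.ax (.kT _))

theorem Prov.toProv' (h : Prov CS A) : Prov' CS A := by
  induction h with
  | ax hA => exact .ax hA
  | mp _ _ hAB hA => exact .mp hAB hA
  | knec _ hA => exact .knec hA
  | s4 hne _ hA => exact .s4 hne hA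
  | rcs hA => exact .rcs hA

theorem Prov'.toProv (h : Prov' CS A) : Prov CS A := by
  induction h with
  | ax hA => exact .ax hA
  | as4 l hne => exact .as4 hne
  | mp _ _ hAB hA => exact .mp hAB hA
  | knec _ hA => exact .knec hA
  | rcs hA => exact .rcs hA

end Equivalence

theorem alternative_axiomatization_general {Ag : Type} [Fintype Ag] (CS : Set (Form Ag))
    (A : Form Ag) : Prov CS A ↔ Prov' CS A :=
  ⟨Prov.toProv', Prov'.toProv⟩

/-- Lemma 4: The systems Π(CS) and Π'(CS) (with rule (S4)
replaced by the axiom scheme (A_S4)) prove the same formulas. -/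
theorem alternative_axiomatization {Ag : Type} [Fintype Ag] [Nonempty Ag]
    (CS : Set (Form Ag)) (hCS : IsConstSpec CS) (A : Form Ag) :
    Prov CS A ↔ Prov' CS A :=
  alternative_axiomatization_general CS A
end
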